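/- arXiv:2506.08259 — 7 statements merged into one kernel-verified Lean document; each statement's English description precedes it below -/
import Mathlib

section
/- Let P0 ⊆ Δ_{k-1} be closed with ∅ ≠ P0 ≠ Δ_{k-1} and PA = Δ_{k-1} \ P0. There exists an NTUB test of P0 against PA of sample size n if and only if there exists a real polynomial β̃ in k variables of total degree at most n such that β̃ is not constant on Δ_{k-1}, β̃(π) ≤ 0 for all π ∈ P0, and β̃(π) ≥ 0 for all π ∈ PA. -/
open Finset

/-- The probability simplex on a finite index set `ι`. -/
def probSimplex (ι : Type) [Fintype ι] : Set (ι → ℝ) :=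
  {π | (∀ i, 0 ≤ π i) ∧ ∑ i, π i = 1}

/-- Count vectors of sample size `n`: functions `x : ι → ℕ` with `∑ i, x i = n`. -/
def countVecs (ι : Type) [Fintype ι] [DecidableEq ι] (n : ℕ) : Finset (ι → ℕ) :=
  (Fintype.piFinset fun _ : ι => Finset.range (n + 1)).filter fun x => ∑ i, x i = n

/-- A (randomized) test of sample size `n`: values in `[0,1]` on all count vectors. -/
def IsTest (ι : Type) [Fintype ι] [DecidableEq ι] (n : ℕ) (φ : (ι → ℕ) → ℝ) : Prop :=
  ∀ x ∈ countVecs ι n, 0 ≤ φ x ∧ φ x ≤ 1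

/-- The power function of a test. -/
noncomputable def powerFn (ι : Type) [Fintype ι] [DecidableEq ι] (n : ℕ)
    (φ : (ι → ℕ) → ℝ) (π : ι → ℝ) : ℝ :=
  ∑ x ∈ countVecs ι n, φ x * (Nat.multinomial Finset.univ x : ℝ) * ∏ i, π i ^ x i

/-- Unbiasedness relative to the null hypothesis `P0`. -/
def Unbiased (ι : Type) [Fintype ι] [DecidableEq ι] (n : ℕ) (P0 : Set (ι → ℝ))
    (φ : (ι → ℕ) → ℝ) : Prop :=
  ∀ π0 ∈ P0, ∀ πA ∈ probSimplex ι \ P0, powerFn ι n φ π0 ≤ powerFn ι n φ πA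

/-- Non-trivial unbiased test: unbiased with non-constant power on the simplex. -/
def IsNTUB (ι : Type) [Fintype ι] [DecidableEq ι] (n : ℕ) (P0 : Set (ι → ℝ))
    (φ : (ι → ℕ) → ℝ) : Prop :=
  Unbiased ι n P0 φ ∧
    ∃ π ∈ probSimplex ι, ∃ π' ∈ probSimplex ι, powerFn ι n φ π ≠ powerFn ι n φ π'

/-- Strictly unbiased test. -/
def IsSUB (ι : Type) [Fintype ι] [DecidableEq ι] (n : ℕ) (P0 : Set (ι → ℝ))
    (φ : (ι → ℕ) → ℝ) : Prop :=
  ∀ π0 ∈ P0, ∀ πA ∈ probSimplex ι \ P0, powerFn ι n φ π0 < powerFn ι n φ πA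

/-- Level-`α` test. -/
def IsLevel (ι : Type) [Fintype ι] [DecidableEq ι] (n : ℕ) (P0 : Set (ι → ℝ)) (α : ℝ)
    (φ : (ι → ℕ) → ℝ) : Prop :=
  ∀ π ∈ P0, powerFn ι n φ π ≤ α

/-- A test has size `α` if the supremum of its power over `P0` is `α`. -/
def HasSize (ι : Type) [Fintype ι] [DecidableEq ι] (n : ℕ) (P0 : Set (ι → ℝ)) (α : ℝ)
    (φ : (ι → ℕ) → ℝ) : Prop :=
  IsLUB (powerFn ι n φ '' P0) α

/-- Uniformly most powerful unbiased level-`α` test. -/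
def IsUMPU (ι : Type) [Fintype ι] [DecidableEq ι] (n : ℕ) (P0 : Set (ι → ℝ)) (α : ℝ)
    (φ : (ι → ℕ) → ℝ) : Prop :=
  IsLevel ι n P0 α φ ∧ Unbiased ι n P0 φ ∧
    ∀ ψ, IsTest ι n ψ → IsLevel ι n P0 α ψ → Unbiased ι n P0 ψ →
      ∀ πA ∈ probSimplex ι \ P0, powerFn ι n ψ πA ≤ powerFn ι n φ πA

theorem mem_countVecs_aux (k n : ℕ) (x : Fin k → ℕ) :
    x ∈ countVecs (Fin k) n ↔ ∑ i, x i = n := by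
  unfold countVecs
  simp only [Finset.mem_filter, Fintype.mem_piFinset, Finset.mem_range, and_iff_right_iff_imp]
  intro h i
  have := Finset.single_le_sum (f := x) (fun i _ => Nat.zero_le _) (Finset.mem_univ i)
  omega

theorem powerFn_const_aux (k n : ℕ) (c : ℝ) (π : Fin k → ℝ) (hπ : π ∈ probSimplex (Fin k)) :
    powerFn (Fin k) n (fun _ => c) π = c := by
  have h := Finset.sum_pow_eq_sum_piAntidiag (Finset.univ : Finset (Fin k)) π n
  have e : Finset.piAntidiag (Finset.univ : Finset (Fin k)) n = countVecs (Fin k) n := by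
    ext x
    rw [mem_countVecs_aux]
    simp
  rw [hπ.2, one_pow, e] at h
  unfold powerFn
  simp_rw [mul_assoc]
  rw [← Finset.mul_sum, ← h, mul_one]

theorem homog_repr_aux (k n : ℕ) (Q : MvPolynomial (Fin k) ℝ) (hQ : Q.IsHomogeneous n) :
    ∃ ψ : (Fin k → ℕ) → ℝ, ∀ π, powerFn (Fin k) n ψ π = MvPolynomial.eval π Q := by
  refine ⟨fun x => Q.coeff (Finsupp.equivFunOnFinite.symm x) /
    (Nat.multinomial Finset.univ x : ℝ), fun π => ?_⟩
  rw [MvPolynomial.eval_eq']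
  unfold powerFn
  have hm : ∀ x : Fin k → ℕ, (Nat.multinomial Finset.univ x : ℝ) ≠ 0 := fun x =>
    Nat.cast_ne_zero.2 (Nat.multinomial_pos _ _).ne'
  have e : ∑ d ∈ Q.support, Q.coeff d * ∏ i, π i ^ d i =
      ∑ d ∈ (countVecs (Fin k) n).map Finsupp.equivFunOnFinite.symm.toEmbedding,
        Q.coeff d * ∏ i, π i ^ d i := by
    apply Finset.sum_subset
    · intro d hd
      rw [Finset.mem_map]
      refine ⟨d, ?_, by ext; simp⟩
      rw [mem_countVecs_aux]
      have := hQ (MvPolynomial.mem_support_iff.1 hd)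
      rw [← this, Finsupp.weight_apply, Finsupp.sum_fintype] <;> simp
    · intro d _ hd
      rw [MvPolynomial.notMem_support_iff.1 hd, zero_mul]
  rw [e, Finset.sum_map]
  refine Finset.sum_congr rfl fun x _ => ?_
  rw [div_mul_cancel₀ _ (hm x)]
  simp

theorem simplex_repr_aux (k n : ℕ) (β : MvPolynomial (Fin k) ℝ) (hβ : β.totalDegree ≤ n) :
    ∃ ψ : (Fin k → ℕ) → ℝ, ∀ π ∈ probSimplex (Fin k),
      powerFn (Fin k) n ψ π = MvPolynomial.eval π β := by
  obtain ⟨ψ, hψ⟩ := homog_repr_aux k n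
    (∑ i ∈ Finset.range (n + 1), MvPolynomial.homogeneousComponent i β *
      (∑ j, MvPolynomial.X j) ^ (n - i)) (by
    apply MvPolynomial.IsHomogeneous.sum
    intro i hi
    have hi' : i ≤ n := by simpa [Nat.lt_succ_iff] using hi
    have h1 := MvPolynomial.homogeneousComponent_isHomogeneous i β
    have h2 : (∑ j : Fin k, (MvPolynomial.X j : MvPolynomial (Fin k) ℝ)).IsHomogeneous 1 :=
      MvPolynomial.IsHomogeneous.sum _ _ _ fun j _ => MvPolynomial.isHomogeneous_X _ _
    have h3 := h1.mul (h2.pow (n - i))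
    have : i + 1 * (n - i) = n := by omega
    rwa [this] at h3)
  refine ⟨ψ, fun π hπ => ?_⟩
  rw [hψ]
  have hb : ∑ i ∈ Finset.range (n + 1), MvPolynomial.homogeneousComponent i β = β := by
    conv_rhs => rw [← MvPolynomial.sum_homogeneousComponent β]
    symm
    apply Finset.sum_subset
    · intro i hi
      simp only [Finset.mem_range] at *
      omega
    · intro i _ hi
      apply MvPolynomial.homogeneousComponent_eq_zero
      simp only [Finset.mem_range] at hi
      omega
  conv_rhs => rw [← hb]
  simp only [map_sum, map_mul, map_pow, MvPolynomial.eval_X, hπ.2, one_pow, mul_one]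

theorem powerFn_affine_aux (k n : ℕ) (a b : ℝ) (ψ : (Fin k → ℕ) → ℝ) (π : Fin k → ℝ)
    (hπ : π ∈ probSimplex (Fin k)) :
    powerFn (Fin k) n (fun x => a * ψ x + b) π = a * powerFn (Fin k) n ψ π + b := by
  conv_rhs => rw [← powerFn_const_aux k n b π hπ]
  unfold powerFn
  rw [Finset.mul_sum, ← Finset.sum_add_distrib]
  exact Finset.sum_congr rfl fun x _ => by ring

theorem stmt_3 (k n : ℕ) (hk : 2 ≤ k) (hn : 1 ≤ n)
    (P0 : Set (Fin k → ℝ)) (hclosed : IsClosed P0) (hsub : P0 ⊆ probSimplex (Fin k))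
    (hne : P0.Nonempty) (hneq : P0 ≠ probSimplex (Fin k)) :
    (∃ φ, IsTest (Fin k) n φ ∧ IsNTUB (Fin k) n P0 φ) ↔
      ∃ β : MvPolynomial (Fin k) ℝ, β.totalDegree ≤ n ∧
        (∃ π ∈ probSimplex (Fin k), ∃ π' ∈ probSimplex (Fin k),
          MvPolynomial.eval π β ≠ MvPolynomial.eval π' β) ∧
        (∀ π ∈ P0, MvPolynomial.eval π β ≤ 0) ∧
        (∀ π ∈ probSimplex (Fin k) \ P0, 0 ≤ MvPolynomial.eval π β) := by
  constructor
  · rintro ⟨φ, -, hU, π1, h1, π2, h2, h12⟩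
    obtain ⟨πA, hA⟩ : (probSimplex (Fin k) \ P0).Nonempty := by
      rw [Set.nonempty_iff_ne_empty, Ne, Set.sdiff_eq_empty]
      exact fun h => hneq (hsub.antisymm h)
    set c := sSup (powerFn (Fin k) n φ '' P0) with hc
    have ev : ∀ π, MvPolynomial.eval π ((∑ x ∈ countVecs (Fin k) n,
        MvPolynomial.C (φ x * (Nat.multinomial Finset.univ x : ℝ)) *
          ∏ i, (MvPolynomial.X i : MvPolynomial (Fin k) ℝ) ^ x i) - MvPolynomial.C c) =
        powerFn (Fin k) n φ π - c := by
      intro π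
      simp [powerFn]
    refine ⟨((∑ x ∈ countVecs (Fin k) n,
        MvPolynomial.C (φ x * (Nat.multinomial Finset.univ x : ℝ)) *
          ∏ i, (MvPolynomial.X i : MvPolynomial (Fin k) ℝ) ^ x i) - MvPolynomial.C c),
      ?_, ⟨π1, h1, π2, h2, ?_⟩, ?_, ?_⟩
    rotate_left
    · rw [ev, ev]
      intro h
      exact h12 (by linarith)
    · intro π hπ
      rw [ev, sub_nonpos]
      refine le_csSup ⟨powerFn (Fin k) n φ πA, ?_⟩ ⟨π, hπ, rfl⟩
      rintro _ ⟨p, hp, rfl⟩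
      exact hU p hp πA hA
    · intro π hπ
      rw [ev, sub_nonneg]
      refine csSup_le (hne.image _) ?_
      rintro _ ⟨p, hp, rfl⟩
      exact hU p hp π hπ
    · rw [sub_eq_add_neg, ← map_neg]
      refine (MvPolynomial.totalDegree_add _ _).trans (max_le ?_ (by simp))
      refine MvPolynomial.totalDegree_finsetSum_le fun x hx => ?_
      refine (MvPolynomial.totalDegree_mul _ _).trans ?_
      rw [MvPolynomial.totalDegree_C, zero_add]
      refine (MvPolynomial.totalDegree_finset_prod _ _).trans ?_
      rw [← (mem_countVecs_aux k n x).1 hx]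
      refine Finset.sum_le_sum fun i _ => ?_
      refine (MvPolynomial.totalDegree_pow _ _).trans ?_
      simp
  · rintro ⟨β, hd, ⟨π1, h1, π2, h2, h12⟩, hle, hge⟩
    obtain ⟨ψ, hψ⟩ := simplex_repr_aux k n β hd
    set M := 1 + ∑ x ∈ countVecs (Fin k) n, |ψ x| with hM
    have hs : 0 ≤ ∑ x ∈ countVecs (Fin k) n, |ψ x| :=
      Finset.sum_nonneg fun _ _ => abs_nonneg _
    have hMpos : 0 < M := by linarith
    have ha : 0 < (2 * M)⁻¹ := by positivity
    have key : ∀ π ∈ probSimplex (Fin k),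
        powerFn (Fin k) n (fun x => (2 * M)⁻¹ * ψ x + 1 / 2) π =
          (2 * M)⁻¹ * MvPolynomial.eval π β + 1 / 2 := by
      intro π hπ
      rw [powerFn_affine_aux k n _ _ ψ π hπ, hψ π hπ]
    refine ⟨fun x => (2 * M)⁻¹ * ψ x + 1 / 2, ?_, ?_, π1, h1, π2, h2, ?_⟩
    · intro x hx
      have hx1 : |ψ x| ≤ M := by
        have := Finset.single_le_sum (f := fun x => |ψ x|) (fun i _ => abs_nonneg _) hx
        linarith
      have := abs_le.1 hx1
      have e : (2 * M)⁻¹ * M = 1 / 2 := by field_simp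
      constructor
      · have := mul_le_mul_of_nonneg_left this.1 ha.le
        linarith
      · have := mul_le_mul_of_nonneg_left this.2 ha.le
        linarith
    · intro p hp q hq
      rw [key p (hsub hp), key q hq.1]
      have := mul_le_mul_of_nonneg_left ((hle p hp).trans (hge q hq)) ha.le
      linarith
    · rw [key _ h1, key _ h2]
      intro h
      exact h12 (mul_left_cancel₀ ha.ne' (by linarith))
end

section
/- Let P0 ⊆ Δ_{k-1} be closed with ∅ ≠ P0 ≠ Δ_{k-1} and PA = Δ_{k-1} \ P0. There exists an SUB test of P0 against PA of sample size n if and only if there exists a real polynomial β̃ in k variables of total degree at most n, not constant on Δ_{k-1}, such that P0 = {π ∈ Δ_{k-1} : β̃(π) ≤ 0} and PA = {π ∈ Δ_{k-1} : β̃(π) > 0}. -/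
open Finset

lemma countVecs_eq (k n : ℕ) :
    countVecs (Fin k) n = Finset.univ.piAntidiag n := by
  ext x
  simp only [countVecs, Finset.mem_filter, Fintype.mem_piFinset, Finset.mem_range,
    Finset.mem_piAntidiag]
  constructor
  · rintro ⟨_, h⟩
    exact ⟨h, by simp⟩
  · rintro ⟨h, _⟩
    refine ⟨fun i => ?_, h⟩
    have := Finset.single_le_sum (f := x) (fun _ _ => Nat.zero_le _) (Finset.mem_univ i)
    have h' : ∑ j, x j = n := h
    omega

lemma powerFn_affine (k n : ℕ) (c : (Fin k → ℕ) → ℝ) (a b : ℝ) (π : Fin k → ℝ)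
    (hπ : π ∈ probSimplex (Fin k)) :
    powerFn (Fin k) n (fun x => a * c x + b) π = a * powerFn (Fin k) n c π + b := by
  have h1 : ∑ x ∈ countVecs (Fin k) n,
      (Nat.multinomial Finset.univ x : ℝ) * ∏ i, π i ^ x i = 1 := by
    rw [countVecs_eq, ← Finset.sum_pow_eq_sum_piAntidiag, hπ.2, one_pow]
  unfold powerFn
  conv_rhs => rw [← mul_one b, ← h1, Finset.mul_sum, Finset.mul_sum, ← Finset.sum_add_distrib]
  refine Finset.sum_congr rfl fun x _ => ?_
  ring

lemma exists_poly (k n : ℕ) (φ : (Fin k → ℕ) → ℝ) :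
    ∃ q : MvPolynomial (Fin k) ℝ, q.totalDegree ≤ n ∧
      ∀ π, MvPolynomial.eval π q = powerFn (Fin k) n φ π := by
  refine ⟨∑ x ∈ countVecs (Fin k) n, MvPolynomial.monomial (Finsupp.equivFunOnFinite.symm x)
    (φ x * (Nat.multinomial Finset.univ x : ℝ)), ?_, ?_⟩
  · refine MvPolynomial.totalDegree_finsetSum_le fun x hx => ?_
    refine (MvPolynomial.totalDegree_monomial_le _ _).trans ?_
    rw [countVecs_eq, Finset.mem_piAntidiag] at hx
    rw [Finsupp.sum_fintype _ _ (by simp)]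
    simp [hx.1]
  · intro π
    unfold powerFn
    rw [map_sum]
    refine Finset.sum_congr rfl fun x _ => ?_
    rw [MvPolynomial.eval_monomial, Finsupp.prod_fintype _ _ (by simp)]
    simp

lemma homog_rep (k n : ℕ) (q : MvPolynomial (Fin k) ℝ) (hq : q.IsHomogeneous n) :
    ∃ c : (Fin k → ℕ) → ℝ, ∀ π, MvPolynomial.eval π q = powerFn (Fin k) n c π := by
  refine ⟨fun x => q.coeff (Finsupp.equivFunOnFinite.symm x) /
    (Nat.multinomial Finset.univ x : ℝ), fun π => ?_⟩
  rw [MvPolynomial.eval_eq']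
  unfold powerFn
  have h2 : ∑ x ∈ countVecs (Fin k) n, q.coeff (Finsupp.equivFunOnFinite.symm x) /
      (Nat.multinomial Finset.univ x : ℝ) * (Nat.multinomial Finset.univ x : ℝ) *
        ∏ i, π i ^ x i = ∑ d ∈ (countVecs (Fin k) n).map
          (Finsupp.equivFunOnFinite : (Fin k →₀ ℕ) ≃ (Fin k → ℕ)).symm.toEmbedding,
          q.coeff d * ∏ i, π i ^ d i := by
    rw [Finset.sum_map]
    refine Finset.sum_congr rfl fun x _ => ?_
    have : (Nat.multinomial Finset.univ x : ℝ) ≠ 0 :=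
      Nat.cast_ne_zero.mpr (Nat.multinomial_pos _ _).ne'
    rw [div_mul_cancel₀ _ this]
    simp
  rw [h2]
  refine Finset.sum_subset ?_ ?_
  · intro d hd
    rw [Finset.mem_map]
    refine ⟨d, ?_, by ext; simp⟩
    rw [countVecs_eq, Finset.mem_piAntidiag]
    have := hq (MvPolynomial.mem_support_iff.mp hd)
    have this : Finsupp.weight (fun _ => 1) d = n := this
    rw [← Finsupp.degree_eq_weight_one, Finsupp.degree_eq_sum] at this
    exact ⟨this, by simp⟩
  · intro d _ hd
    rw [MvPolynomial.notMem_support_iff.mp hd, zero_mul]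

lemma poly_rep (k n : ℕ) (β : MvPolynomial (Fin k) ℝ) (hβ : β.totalDegree ≤ n) :
    ∃ c : (Fin k → ℕ) → ℝ, ∀ π ∈ probSimplex (Fin k),
      MvPolynomial.eval π β = powerFn (Fin k) n c π := by
  have hq : (∑ d ∈ Finset.range (β.totalDegree + 1), MvPolynomial.homogeneousComponent d β *
      (∑ i, MvPolynomial.X i) ^ (n - d)).IsHomogeneous n := by
    refine MvPolynomial.IsHomogeneous.sum _ _ _ fun d hd => ?_
    have h1 := MvPolynomial.homogeneousComponent_isHomogeneous d β
    have h2 : (∑ i : Fin k, (MvPolynomial.X i : MvPolynomial (Fin k) ℝ)).IsHomogeneous 1 :=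
      MvPolynomial.IsHomogeneous.sum _ _ _ fun i _ => MvPolynomial.isHomogeneous_X _ i
    have h3 := h1.mul (h2.pow (n - d))
    have : d + 1 * (n - d) = n := by
      rw [Finset.mem_range] at hd
      omega
    rwa [this] at h3
  obtain ⟨c, hc⟩ := homog_rep k n _ hq
  refine ⟨c, fun π hπ => ?_⟩
  rw [← hc π]
  conv_lhs => rw [← MvPolynomial.sum_homogeneousComponent β]
  rw [map_sum, map_sum]
  refine Finset.sum_congr rfl fun d _ => ?_
  simp [hπ.2]

/-- an SUB test of sample size `n` exists iff there is a polynomial of degree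
at most `n`, non-constant on the simplex, whose nonpositivity set cuts out exactly `P0`. -/
theorem stmt_4 (k n : ℕ) (hk : 2 ≤ k) (hn : 1 ≤ n)
    (P0 : Set (Fin k → ℝ)) (hclosed : IsClosed P0) (hsub : P0 ⊆ probSimplex (Fin k))
    (hne : P0.Nonempty) (hneq : P0 ≠ probSimplex (Fin k)) :
    (∃ φ, IsTest (Fin k) n φ ∧ IsSUB (Fin k) n P0 φ) ↔
      ∃ β : MvPolynomial (Fin k) ℝ, β.totalDegree ≤ n ∧
        (∃ π ∈ probSimplex (Fin k), ∃ π' ∈ probSimplex (Fin k),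
          MvPolynomial.eval π β ≠ MvPolynomial.eval π' β) ∧
        P0 = {π ∈ probSimplex (Fin k) | MvPolynomial.eval π β ≤ 0} ∧
        probSimplex (Fin k) \ P0 = {π ∈ probSimplex (Fin k) | 0 < MvPolynomial.eval π β} := by
  have hbdd : Bornology.IsBounded (probSimplex (Fin k)) := by
    refine (Metric.isBounded_Icc (0 : Fin k → ℝ) 1).subset fun π hπ => ⟨hπ.1, fun i => ?_⟩
    rw [Pi.one_apply, ← hπ.2]
    exact Finset.single_le_sum (fun j _ => hπ.1 j) (Finset.mem_univ i)
  constructor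
  · rintro ⟨φ, -, hφ⟩
    obtain ⟨q, hqd, hq⟩ := exists_poly k n φ
    have hcomp : IsCompact P0 := Metric.isCompact_of_isClosed_isBounded hclosed
      (hbdd.subset hsub)
    obtain ⟨π0, hπ0, hmax⟩ := hcomp.exists_isMaxOn hne
      (f := fun π => MvPolynomial.eval π q) (MvPolynomial.continuous_eval q).continuousOn
    have hle : ∀ π ∈ P0, MvPolynomial.eval π q ≤ MvPolynomial.eval π0 q := fun π hπ => hmax hπ
    have hlt : ∀ π ∈ probSimplex (Fin k), π ∉ P0 →
        MvPolynomial.eval π0 q < MvPolynomial.eval π q := by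
      intro π hπ hn
      rw [hq, hq]
      exact hφ π0 hπ0 π ⟨hπ, hn⟩
    obtain ⟨πA, hA, hA'⟩ : ∃ π ∈ probSimplex (Fin k), π ∉ P0 := by
      by_contra! h
      exact hneq (hsub.antisymm h)
    refine ⟨q - MvPolynomial.C (MvPolynomial.eval π0 q), ?_, ⟨π0, hsub hπ0, πA, hA, ?_⟩, ?_, ?_⟩
    · exact (MvPolynomial.totalDegree_sub_C_le _ _).trans hqd
    · have := hlt πA hA hA'
      simp only [map_sub, MvPolynomial.eval_C]
      intro h
      linarith
    · ext π
      simp only [map_sub, MvPolynomial.eval_C, Set.mem_ofPred_eq, sub_nonpos]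
      refine ⟨fun h => ⟨hsub h, hle π h⟩, fun ⟨h, h'⟩ => ?_⟩
      by_contra hn
      exact absurd h' (not_le.mpr (hlt π h hn))
    · ext π
      simp only [map_sub, MvPolynomial.eval_C, Set.mem_ofPred_eq, sub_pos, Set.mem_sdiff]
      exact ⟨fun h => ⟨h.1, hlt π h.1 h.2⟩,
        fun h => ⟨h.1, fun hp => absurd h.2 (not_lt.mpr (hle π hp))⟩⟩
  · rintro ⟨β, hd, -, h0, hA⟩
    obtain ⟨c, hc⟩ := poly_rep k n β hd
    obtain ⟨M, hM, hcM⟩ : ∃ M : ℝ, 0 < M ∧ ∀ x ∈ countVecs (Fin k) n, |c x| ≤ M := by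
      refine ⟨∑ x ∈ countVecs (Fin k) n, |c x| + 1,
        add_pos_of_nonneg_of_pos (Finset.sum_nonneg fun _ _ => abs_nonneg _) one_pos,
        fun x hx => ?_⟩
      have := Finset.single_le_sum (f := fun x => |c x|) (fun _ _ => abs_nonneg _) hx
      linarith
    refine ⟨fun x => (1 / (2 * M)) * c x + 1 / 2, fun x hx => ?_, fun π0 hπ0 πA hπA => ?_⟩
    · have h := abs_le.mp (hcM x hx)
      have e : (1 / (2 * M)) * c x + 1 / 2 = (c x + M) / (2 * M) := by
        field_simp
      simp only
      rw [e]
      exact ⟨div_nonneg (by linarith) (by linarith), (div_le_one (by linarith)).mpr (by linarith)⟩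
    · rw [powerFn_affine k n c _ _ _ (hsub hπ0), powerFn_affine k n c _ _ _ hπA.1,
        ← hc _ (hsub hπ0), ← hc _ hπA.1]
      rw [hA] at hπA
      rw [h0] at hπ0
      have hlt := lt_of_le_of_lt hπ0.2 hπA.2
      have hpos : 0 < 1 / (2 * M) := by positivity
      have := mul_lt_mul_of_pos_left hlt hpos
      linarith
end

section
/- Let k ≥ 3, let a ∈ ℝ^{k-1} with a ≠ 0 and b ∈ ℝ, and let P0 = {π ∈ Δ_{k-1} : π i > 0 for all i, and ∑_{i=1}^{k-1} a_i · log(π_i / π_k) = b}. Then there exist a sample size n and an NTUB test of P0 against Δ_{k-1} \ P0 of sample size n if and only if there exist a' ∈ ℚ^{k-1} and b' ∈ ℝ such that P0 = {π ∈ Δ_{k-1} : π i > 0 for all i, and ∑_{i=1}^{k-1} a'_i · log(π_i / π_k) = b'}. -/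
open Finset

/-- log-linear null hypothesis -/
def NH {m : ℕ} (a : Fin m → ℝ) (b : ℝ) : Set (Fin (m+1) → ℝ) :=
  {π ∈ probSimplex (Fin (m+1)) | (∀ i, 0 < π i) ∧
      ∑ i : Fin m, a i * Real.log (π i.castSucc / π (Fin.last m)) = b}

noncomputable def EE {m : ℕ} (s : Fin m → ℝ) : Fin (m+1) → ℝ :=
  fun i => Real.exp ((Fin.snoc s 0 : Fin (m+1) → ℝ) i)

noncomputable def PP {m : ℕ} (s : Fin m → ℝ) : Fin (m+1) → ℝ :=
  fun i => (∑ j, EE s j)⁻¹ * EE s i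

lemma EE_pos {m : ℕ} (s : Fin m → ℝ) (i) : 0 < EE s i := Real.exp_pos _

lemma EE_sum_pos {m : ℕ} (s : Fin m → ℝ) : 0 < ∑ j, EE s j :=
  Finset.sum_pos (fun i _ => EE_pos s i) ⟨Fin.last m, Finset.mem_univ _⟩

lemma PP_pos {m : ℕ} (s : Fin m → ℝ) (i) : 0 < PP s i :=
  mul_pos (inv_pos.2 (EE_sum_pos s)) (EE_pos s i)

lemma PP_sum {m : ℕ} (s : Fin m → ℝ) : ∑ i, PP s i = 1 := by
  unfold PP
  rw [← Finset.mul_sum, inv_mul_cancel₀ (EE_sum_pos s).ne']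

lemma PP_mem {m : ℕ} (s : Fin m → ℝ) : PP s ∈ probSimplex (Fin (m+1)) :=
  ⟨fun i => (PP_pos s i).le, PP_sum s⟩

lemma PP_log {m : ℕ} (s : Fin m → ℝ) (i : Fin m) :
    Real.log (PP s i.castSucc / PP s (Fin.last m)) = s i := by
  have h := (inv_pos.2 (EE_sum_pos s)).ne'
  unfold PP
  rw [mul_div_mul_left _ _ h]
  simp [EE]

lemma PP_mem_NH {m : ℕ} (a : Fin m → ℝ) (b : ℝ) (s : Fin m → ℝ) :
    PP s ∈ NH a b ↔ ∑ i, a i * s i = b := by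
  constructor
  · rintro ⟨_, _, h⟩
    simpa only [PP_log] using h
  · intro h
    exact ⟨PP_mem s, PP_pos s, by simpa only [PP_log] using h⟩

lemma countVecs_eq_s8 {m : ℕ} (n : ℕ) :
    countVecs (Fin m) n = Finset.piAntidiag Finset.univ n := by
  ext x
  simp only [countVecs, Finset.mem_filter, Fintype.mem_piFinset, Finset.mem_range,
    Finset.mem_piAntidiag]
  constructor
  · rintro ⟨_, h⟩
    exact ⟨h, fun i _ => Finset.mem_univ i⟩
  · rintro ⟨h, _⟩
    refine ⟨fun i => ?_, h⟩
    have := Finset.single_le_sum (f := x) (fun i _ => Nat.zero_le _) (Finset.mem_univ i)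
    exact Nat.lt_succ_of_le (this.trans h.le)

lemma mem_countVecs {m : ℕ} (n : ℕ) (x : Fin m → ℕ) :
    x ∈ countVecs (Fin m) n ↔ ∑ i, x i = n := by
  rw [countVecs_eq_s8]; simp

lemma powerFn_const {m : ℕ} (n : ℕ) (c : ℝ) (π : Fin m → ℝ) :
    powerFn (Fin m) n (fun _ => c) π = c * (∑ i, π i) ^ n := by
  rw [Finset.sum_pow_eq_sum_piAntidiag, powerFn, countVecs_eq_s8, Finset.mul_sum]
  simp only [mul_assoc]

lemma powerFn_add {m : ℕ} (n : ℕ) (φ ψ : (Fin m → ℕ) → ℝ) (π : Fin m → ℝ) :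
    powerFn (Fin m) n (fun x => φ x + ψ x) π = powerFn (Fin m) n φ π + powerFn (Fin m) n ψ π := by
  simp only [powerFn, add_mul, Finset.sum_add_distrib]

lemma powerFn_smul {m : ℕ} (n : ℕ) (φ : (Fin m → ℕ) → ℝ) (r : ℝ) (π : Fin m → ℝ) :
    powerFn (Fin m) n φ (fun i => r * π i) = r ^ n * powerFn (Fin m) n φ π := by
  simp only [powerFn, Finset.mul_sum]
  refine Finset.sum_congr rfl fun x hx => ?_
  rw [mem_countVecs] at hx
  rw [← hx, ← Finset.prod_pow_eq_pow_sum]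
  simp only [mul_pow, Finset.prod_mul_distrib]
  ring

lemma powerFn_single {m : ℕ} (n : ℕ) (y : Fin m → ℕ) (hy : ∑ i, y i = n) (r : ℝ) (π : Fin m → ℝ) :
    powerFn (Fin m) n (fun x => if x = y then r / (Nat.multinomial Finset.univ x : ℝ) else 0) π
      = r * ∏ i, π i ^ y i := by
  rw [powerFn, Finset.sum_eq_single_of_mem y ((mem_countVecs n y).2 hy)]
  · have : (Nat.multinomial Finset.univ y : ℝ) ≠ 0 := by
      exact_mod_cast (Nat.multinomial_pos Finset.univ y).ne'
    simp [this]
  · intro x _ hxy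
    simp [hxy]

lemma powerFn_cont {m : ℕ} (n : ℕ) (φ : (Fin m → ℕ) → ℝ) : Continuous (powerFn (Fin m) n φ) := by
  unfold powerFn
  fun_prop

lemma EE_cont {m : ℕ} (i : Fin (m+1)) : Continuous (fun s : Fin m → ℝ => EE s i) := by
  unfold EE
  refine Real.continuous_exp.comp ?_
  refine Fin.lastCases ?_ (fun j => ?_) i
  · simpa using continuous_const
  · simpa using continuous_apply j

lemma PP_cont {m : ℕ} : Continuous (PP : (Fin m → ℝ) → _) := by
  refine continuous_pi fun i => ?_
  unfold PP
  exact ((continuous_finsetSum _ fun j _ => EE_cont j).inv₀ fun s => (EE_sum_pos s).ne').mul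
    (EE_cont i)

lemma dot_self_pos {m : ℕ} {a : Fin m → ℝ} (ha : a ≠ 0) : 0 < ∑ i, a i * a i := by
  obtain ⟨j, hj⟩ := Function.ne_iff.1 ha
  exact Finset.sum_pos' (fun i _ => mul_self_nonneg _) ⟨j, Finset.mem_univ _, by
    exact mul_self_pos.2 hj⟩

lemma exists_sol {m : ℕ} {a : Fin m → ℝ} (ha : a ≠ 0) (b : ℝ) : ∃ s : Fin m → ℝ,
    ∑ i, a i * s i = b := by
  have h := dot_self_pos ha
  refine ⟨fun i => b / (∑ i, a i * a i) * a i, ?_⟩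
  calc _ = ∑ i, b / (∑ i, a i * a i) * (a i * a i) := by
        refine Finset.sum_congr rfl fun i _ => by ring
    _ = b := by rw [← Finset.mul_sum, div_mul_cancel₀ _ h.ne']

lemma power_le {m : ℕ} {a : Fin m → ℝ} (ha : a ≠ 0) (b : ℝ) (n : ℕ) (φ : (Fin (m+1) → ℕ) → ℝ)
    (hu : Unbiased (Fin (m+1)) n (NH a b) φ) (s t : Fin m → ℝ)
    (hs : ∑ i, a i * s i = b) (ht : ∑ i, a i * t i = b) :
    powerFn (Fin (m+1)) n φ (PP s) ≤ powerFn (Fin (m+1)) n φ (PP t) := by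
  have hc : Continuous (fun ε : ℝ => powerFn (Fin (m+1)) n φ (PP (t + ε • a))) :=
    (powerFn_cont n φ).comp (PP_cont.comp (by fun_prop))
  have h1 : Filter.Tendsto (fun ε : ℝ => powerFn (Fin (m+1)) n φ (PP (t + ε • a)))
      (nhdsWithin 0 {0}ᶜ) (nhds (powerFn (Fin (m+1)) n φ (PP t))) := by
    have := (hc.tendsto 0).mono_left (nhdsWithin_le_nhds (s := {0}ᶜ))
    simpa using this
  refine ge_of_tendsto h1 ?_
  filter_upwards [self_mem_nhdsWithin] with ε hε
  refine hu _ ((PP_mem_NH a b s).2 hs) _ ⟨PP_mem _, ?_⟩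
  rw [PP_mem_NH]
  have e : ∑ i, a i * (t + ε • a) i = b + ε * ∑ i, a i * a i := by
    rw [← ht, Finset.mul_sum, ← Finset.sum_add_distrib]
    refine Finset.sum_congr rfl fun i _ => ?_
    simp; ring
  rw [e]
  have : ε * ∑ i, a i * a i ≠ 0 := mul_ne_zero hε (dot_self_pos ha).ne'
  intro h
  apply this
  linarith

/-- the null directions -/
def KK {m : ℕ} (a : Fin m → ℝ) : AddSubgroup (Fin m → ℝ) where
  carrier := {s | ∑ i, a i * s i = 0}
  zero_mem' := by simp
  add_mem' := by
    intro s t hs ht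
    simp only [Set.mem_ofPred_eq] at *
    simp [mul_add, Finset.sum_add_distrib, hs, ht]
  neg_mem' := by
    intro s hs
    simp only [Set.mem_ofPred_eq] at *
    simp [hs]

noncomputable def chi {m : ℕ} (a : Fin m → ℝ) (x : Fin (m+1) → ℕ) :
    Multiplicative (KK a) →* ℝ where
  toFun s := Real.exp (∑ i, (x (Fin.castSucc i) : ℝ) * (s.toAdd : Fin m → ℝ) i)
  map_one' := by simp
  map_mul' s t := by
    rw [← Real.exp_add]
    simp [mul_add, Finset.sum_add_distrib]

lemma prod_EE {m : ℕ} (s : Fin m → ℝ) (x : Fin (m+1) → ℕ) :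
    ∏ i, EE s i ^ x i = Real.exp (∑ i, (x (Fin.castSucc i) : ℝ) * s i) := by
  rw [Fin.prod_univ_castSucc, Real.exp_sum]
  simp [EE, Real.exp_nat_mul]

lemma exists_dep {m : ℕ} {a : Fin m → ℝ} (ha : a ≠ 0) (b : ℝ) (n : ℕ) (φ : (Fin (m+1) → ℕ) → ℝ)
    (hu : IsNTUB (Fin (m+1)) n (NH a b) φ) :
    ∃ x ∈ countVecs (Fin (m+1)) n, ∃ y ∈ countVecs (Fin (m+1)) n, x ≠ y ∧ chi a x = chi a y := by
  by_contra! H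
  obtain ⟨hu, π, hπ, π', hπ', hne⟩ := hu
  obtain ⟨s0, hs0⟩ := exists_sol ha b
  set c := powerFn (Fin (m+1)) n φ (PP s0) with hc
  have hconst : ∀ s, ∑ i, a i * s i = b → powerFn (Fin (m+1)) n φ (PP s) = c := fun s hs =>
    le_antisymm (power_le ha b n φ hu _ _ hs hs0) (power_le ha b n φ hu _ _ hs0 hs)
  have hzero : ∀ s, ∑ i, a i * s i = b →
      powerFn (Fin (m+1)) n (fun x => φ x + (-c)) (EE s) = 0 := by
    intro s hs
    have h1 : powerFn (Fin (m+1)) n (fun x => φ x + (-c)) (PP s) = 0 := by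
      rw [powerFn_add, powerFn_const, hconst s hs, PP_sum]; simp
    unfold PP at h1
    rw [powerFn_smul] at h1
    exact (mul_eq_zero.1 h1).resolve_left (pow_ne_zero _ (inv_ne_zero (EE_sum_pos s).ne'))
  have li := linearIndependent_monoidHom (Multiplicative (KK a)) ℝ
  have inj : Function.Injective
      (fun x : countVecs (Fin (m+1)) n => chi a (x : Fin (m+1) → ℕ)) := by
    intro x y hxy
    by_contra hne
    exact H x x.2 y y.2 (fun h => hne (Subtype.ext h)) hxy
  have li2 := li.comp _ inj
  rw [Fintype.linearIndependent_iff] at li2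
  have key := li2 (fun x => (φ x + (-c)) * (Nat.multinomial Finset.univ (x : Fin (m+1) → ℕ) : ℝ) *
    Real.exp (∑ i, ((x : Fin (m+1) → ℕ) (Fin.castSucc i) : ℝ) * s0 i)) (by
      funext s
      have hs : ∑ i, a i * (s0 + (s.toAdd : Fin m → ℝ)) i = b := by
        have h2 : ∑ i, a i * (s.toAdd : Fin m → ℝ) i = 0 := s.toAdd.2
        simp only [Pi.add_apply, mul_add, Finset.sum_add_distrib, hs0, h2, add_zero]
      have h3 := hzero _ hs
      rw [powerFn, ← Finset.sum_coe_sort] at h3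
      rw [Finset.sum_apply]
      simp only [Pi.zero_apply]
      rw [← h3]
      refine Finset.sum_congr rfl fun x _ => ?_
      rw [prod_EE]
      simp only [Pi.add_apply, mul_add, Finset.sum_add_distrib, Real.exp_add]
      simp only [Pi.smul_apply, Function.comp_apply, smul_eq_mul, chi, MonoidHom.coe_mk, OneHom.coe_mk]
      ring)
  have hφ : ∀ x ∈ countVecs (Fin (m+1)) n, φ x = c := by
    intro x hx
    have h4 := key ⟨x, hx⟩
    have h5 : (Nat.multinomial Finset.univ x : ℝ) ≠ 0 := by
      exact_mod_cast (Nat.multinomial_pos Finset.univ x).ne'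
    have h6 := (mul_eq_zero.1 ((mul_eq_zero.1 h4).resolve_right (Real.exp_pos _).ne')).resolve_right h5
    linarith
  have hall : ∀ π ∈ probSimplex (Fin (m+1)), powerFn (Fin (m+1)) n φ π = c := by
    intro π hπ
    have : powerFn (Fin (m+1)) n φ π = powerFn (Fin (m+1)) n (fun _ => c) π := by
      unfold powerFn
      exact Finset.sum_congr rfl fun x hx => by rw [hφ x hx]
    rw [this, powerFn_const, hπ.2]; simp
  exact hne (by rw [hall π hπ, hall π' hπ'])

lemma forward {m : ℕ} {a : Fin m → ℝ} (ha : a ≠ 0) (b : ℝ) (n : ℕ) (φ : (Fin (m+1) → ℕ) → ℝ)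
    (hu : IsNTUB (Fin (m+1)) n (NH a b) φ) :
    ∃ (a' : Fin m → ℚ) (b' : ℝ), NH a b = NH (fun i => (a' i : ℝ)) b' := by
  obtain ⟨x, hx, y, hy, hxy, hchi⟩ := exists_dep ha b n φ hu
  rw [mem_countVecs] at hx hy
  obtain ⟨j, hj⟩ := Function.ne_iff.1 ha
  have hj : a j ≠ 0 := hj
  have hdot : ∀ s : Fin m → ℝ, ∑ i, a i * s i = 0 →
      ∑ i, (x (Fin.castSucc i) : ℝ) * s i = ∑ i, (y (Fin.castSucc i) : ℝ) * s i := by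
    intro s hs
    have h := DFunLike.congr_fun hchi (Multiplicative.ofAdd (⟨s, hs⟩ : KK a))
    exact Real.exp_injective h
  set l : ℝ := ((x (Fin.castSucc j) : ℝ) - y (Fin.castSucc j)) / a j with hl
  have hprop : ∀ i : Fin m, (x (Fin.castSucc i) : ℝ) - y (Fin.castSucc i) = l * a i := by
    intro i
    have h := hdot (Pi.single i (a j) - Pi.single j (a i)) (by
      simp [mul_sub, Finset.sum_sub_distrib, Pi.single_apply]; ring)
    simp [mul_sub, Finset.sum_sub_distrib, Pi.single_apply] at h
    rw [hl]
    field_simp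
    linarith
  have hl0 : l ≠ 0 := by
    intro h0
    apply hxy
    have h1 : ∀ i : Fin m, x (Fin.castSucc i) = y (Fin.castSucc i) := by
      intro i
      have := hprop i
      rw [h0, zero_mul, sub_eq_zero] at this
      exact_mod_cast this
    rw [Fin.sum_univ_castSucc] at hx hy
    simp only [h1] at hx
    funext i
    refine Fin.lastCases ?_ (fun i => ?_) i
    · omega
    · exact h1 i
  refine ⟨fun i => (x (Fin.castSucc i) : ℚ) - y (Fin.castSucc i), l * b, ?_⟩
  ext π
  simp only [NH, Set.mem_ofPred_eq]
  refine and_congr_right fun _ => and_congr_right fun _ => ?_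
  push_cast
  simp only [hprop, mul_assoc]
  rw [← Finset.mul_sum]
  exact (mul_right_inj' hl0).symm

lemma exists_int {m : ℕ} (a' : Fin m → ℚ) : ∃ (N : ℕ) (c : Fin m → ℤ), 0 < N ∧
    ∀ i, (c i : ℝ) = N * (a' i : ℝ) := by
  have hN : 0 < ∏ j, (a' j).den := Finset.prod_pos fun j _ => (a' j).den_pos
  have : ∀ i, ∃ c : ℤ, (c : ℝ) = ((∏ j, (a' j).den : ℕ) : ℝ) * (a' i : ℝ) := by
    intro i
    obtain ⟨t, ht⟩ := Finset.dvd_prod_of_mem (fun j => (a' j).den) (Finset.mem_univ i)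
    refine ⟨(a' i).num * t, ?_⟩
    rw [ht]
    have h1 : (a' i : ℝ) * ((a' i).den : ℝ) = ((a' i).num : ℝ) := by
      exact_mod_cast Rat.mul_den_eq_num (a' i)
    push_cast
    rw [← h1]; ring
  choose c hc using this
  exact ⟨_, c, hN, hc⟩

lemma mono_iff {m : ℕ} (c : Fin m → ℤ) (B : ℝ) (u v : Fin (m+1) → ℕ)
    (huv : ∀ i : Fin m, (u i.castSucc : ℤ) - v i.castSucc = c i) (hs : ∑ i, u i = ∑ i, v i)
    (π : Fin (m+1) → ℝ) (hπ : ∀ i, 0 < π i) :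
    ∏ i, π i ^ u i = Real.exp B * ∏ i, π i ^ v i ↔
      ∑ i : Fin m, (c i : ℝ) * Real.log (π i.castSucc / π (Fin.last m)) = B := by
  have hp : ∀ w : Fin (m+1) → ℕ, ∏ i, π i ^ w i = Real.exp (∑ i, (w i : ℝ) * Real.log (π i)) := by
    intro w
    rw [Real.exp_sum]
    refine Finset.prod_congr rfl fun i _ => ?_
    rw [Real.exp_nat_mul, Real.exp_log (hπ i)]
  rw [hp, hp, ← Real.exp_add, Real.exp_injective.eq_iff]
  have hc : ∀ i : Fin m, (c i : ℝ) = (u i.castSucc : ℝ) - v i.castSucc := by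
    intro i; rw [← huv i]; push_cast; ring
  have hs' : ∑ i, (u i : ℝ) = ∑ i, (v i : ℝ) := by exact_mod_cast hs
  rw [Fin.sum_univ_castSucc, Fin.sum_univ_castSucc (n := m) (f := fun i => (v i : ℝ))] at hs'
  have e : ∑ i : Fin m, (c i : ℝ) * Real.log (π i.castSucc / π (Fin.last m)) =
      ∑ i, (u i : ℝ) * Real.log (π i) - ∑ i, (v i : ℝ) * Real.log (π i) := by
    rw [Fin.sum_univ_castSucc, Fin.sum_univ_castSucc (f := fun i => (v i : ℝ) * Real.log (π i))]
    have h2 : ∀ i : Fin m, (c i : ℝ) * Real.log (π i.castSucc / π (Fin.last m)) =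
        (u i.castSucc : ℝ) * Real.log (π i.castSucc) - v i.castSucc * Real.log (π i.castSucc)
        - (u i.castSucc : ℝ) * Real.log (π (Fin.last m))
        + (v i.castSucc : ℝ) * Real.log (π (Fin.last m)) := by
      intro i
      rw [hc, Real.log_div (hπ _).ne' (hπ _).ne']; ring
    simp only [h2, Finset.sum_add_distrib, Finset.sum_sub_distrib, ← Finset.sum_mul]
    linear_combination (-Real.log (π (Fin.last m))) * hs'
  rw [e]
  constructor <;> intro h <;> linarith

lemma backward {m : ℕ} {a : Fin m → ℝ} (ha : a ≠ 0) (b : ℝ) (a' : Fin m → ℚ) (b' : ℝ)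
    (h : NH a b = NH (fun i => (a' i : ℝ)) b') :
    ∃ n, 1 ≤ n ∧ ∃ φ, IsTest (Fin (m+1)) n φ ∧ IsNTUB (Fin (m+1)) n (NH a b) φ := by
  obtain ⟨N, c, hN, hc⟩ := exists_int a'
  have hN' : (N : ℝ) ≠ 0 := by exact_mod_cast hN.ne'
  set B : ℝ := N * b' with hB
  have hmem : ∀ π ∈ probSimplex (Fin (m+1)), (∀ i, 0 < π i) → (π ∈ NH a b ↔
      ∑ i : Fin m, (c i : ℝ) * Real.log (π i.castSucc / π (Fin.last m)) = B) := by
    intro π h1 h2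
    rw [h]
    simp only [NH, Set.mem_ofPred_eq, h1, true_and]
    simp only [hc, mul_assoc, ← Finset.mul_sum, hB]
    rw [mul_right_inj' hN']
    exact ⟨fun h => h.2, fun h => ⟨h2, h⟩⟩
  obtain ⟨s0, hs0⟩ := exists_sol ha b
  obtain ⟨s1, hs1⟩ := exists_sol ha (b + 1)
  have m0 : PP s0 ∈ NH a b := (PP_mem_NH a b s0).2 hs0
  have m1 : PP s1 ∉ NH a b := by rw [PP_mem_NH, hs1]; simp
  set C : Fin (m+1) → ℤ := Fin.snoc c (-∑ i, c i) with hC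
  have hCs : ∑ i, C i = 0 := by
    rw [Fin.sum_univ_castSucc]; simp [hC]
  set u : Fin (m+1) → ℕ := fun i => (C i).toNat with hu
  set v : Fin (m+1) → ℕ := fun i => (-C i).toNat with hv
  have huvC : ∀ i, (u i : ℤ) - v i = C i := fun i => by simp only [hu, hv]; omega
  have huv : ∀ i : Fin m, (u i.castSucc : ℤ) - v i.castSucc = c i := by
    intro i; rw [huvC]; simp [hC]
  have hs : ∑ i, u i = ∑ i, v i := by
    have : ∑ i, ((u i : ℤ) - v i) = 0 := by simp only [huvC, hCs]
    rw [Finset.sum_sub_distrib, sub_eq_zero] at this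
    exact_mod_cast this
  have hiff : ∀ π ∈ probSimplex (Fin (m+1)), (∀ i, 0 < π i) → (π ∈ NH a b ↔
      ∏ i, π i ^ u i = Real.exp B * ∏ i, π i ^ v i) := fun π h1 h2 => by
    rw [hmem π h1 h2, mono_iff c B u v huv hs π h2]
  set d := ∑ i, u i with hd
  have hd0 : d ≠ 0 := by
    intro h0
    have u0 : ∀ i, u i = 0 := by
      intro i
      have := Finset.single_le_sum (f := u) (fun i _ => Nat.zero_le _) (Finset.mem_univ i)
      omega
    have v0 : ∀ i, v i = 0 := by
      intro i
      have := Finset.single_le_sum (f := v) (fun i _ => Nat.zero_le _) (Finset.mem_univ i)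
      omega
    rw [hiff _ (PP_mem s1) (PP_pos s1)] at m1
    rw [hiff _ (PP_mem s0) (PP_pos s0)] at m0
    simp only [u0, v0, pow_zero] at m0 m1
    exact m1 m0
  set D := Real.exp B with hD
  have hDp : 0 < D := Real.exp_pos B
  set ε : ℝ := 1 / (2 * (1 + 2 * D + D ^ 2)) with hε
  have hεp : 0 < ε := by positivity
  set G : (Fin (m+1) → ℕ) → ℝ → (Fin (m+1) → ℕ) → ℝ :=
    fun y r x => if x = y then r / (Nat.multinomial Finset.univ x : ℝ) else 0 with hG
  have hGb : ∀ y r x, |G y r x| ≤ |r| := by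
    intro y r x
    simp only [hG]
    split_ifs
    · rw [abs_div]
      refine div_le_self (abs_nonneg r) ?_
      rw [Nat.abs_cast]
      exact_mod_cast Nat.multinomial_pos Finset.univ x
    · simp
  have hpow : ∀ π ∈ probSimplex (Fin (m+1)), powerFn (Fin (m+1)) (2 * d)
      (fun x => (((1/2 : ℝ) + G (fun i => 2 * u i) ε x) + G (fun i => u i + v i) (-2 * D * ε) x)
        + G (fun i => 2 * v i) (D ^ 2 * ε) x) π =
      1/2 + ε * (∏ i, π i ^ u i - D * ∏ i, π i ^ v i) ^ 2 := by
    intro π hπ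
    rw [powerFn_add, powerFn_add, powerFn_add, powerFn_const, powerFn_single, powerFn_single,
      powerFn_single, hπ.2]
    · simp only [pow_add, pow_mul', Finset.prod_mul_distrib, Finset.prod_pow]
      ring
    · rw [← Finset.mul_sum, ← hs]
    · rw [Finset.sum_add_distrib, ← hs]; omega
    · rw [← Finset.mul_sum]
  refine ⟨2 * d, by omega, (fun x => (((1/2 : ℝ) + G (fun i => 2 * u i) ε x) + G (fun i => u i + v i) (-2 * D * ε) x)
        + G (fun i => 2 * v i) (D ^ 2 * ε) x), ?_, ?_, PP s0, PP_mem s0, PP s1, PP_mem s1, ?_⟩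
  · intro x _
    have h1 := abs_le.1 (hGb (fun i => 2 * u i) ε x)
    have h2 := abs_le.1 (hGb (fun i => u i + v i) (-2 * D * ε) x)
    have h3 := abs_le.1 (hGb (fun i => 2 * v i) (D ^ 2 * ε) x)
    have e1 : |ε| = ε := abs_of_pos hεp
    have e2 : |-2 * D * ε| = 2 * D * ε := by
      rw [abs_mul, abs_mul, abs_of_pos hDp, e1]; norm_num
    have e3 : |D ^ 2 * ε| = D ^ 2 * ε := abs_of_pos (by positivity)
    rw [e1] at h1
    rw [e2] at h2
    rw [e3] at h3
    have e4 : ε + 2 * D * ε + D ^ 2 * ε = 1/2 := by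
      rw [hε]; field_simp
    constructor <;> linarith [h1.1, h1.2, h2.1, h2.2, h3.1, h3.2]
  · intro π0 h0 πA hA
    rw [hpow π0 h0.1, hpow πA hA.1, (hiff π0 h0.1 h0.2.1).1 h0]
    simp only [sub_self]
    have : 0 ≤ ε * (∏ i, πA i ^ u i - D * ∏ i, πA i ^ v i) ^ 2 := by positivity
    linarith
  · rw [hpow _ (PP_mem s0), hpow _ (PP_mem s1), (hiff _ (PP_mem s0) (PP_pos s0)).1 m0]
    rw [hiff _ (PP_mem s1) (PP_pos s1), ← sub_eq_zero] at m1
    have : 0 < ε * (∏ i, PP s1 i ^ u i - D * ∏ i, PP s1 i ^ v i) ^ 2 := by positivity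
    simp only [sub_self]
    intro hh
    linarith

/-- a log-linear null hypothesis admits an NTUB test (for some sample size)
iff it admits a representation with rational coefficients. -/
theorem stmt_8 (k : ℕ) (hk : 3 ≤ k)
    (a : Fin (k - 1) → ℝ) (ha : a ≠ 0) (b : ℝ)
    (P0 : Set (Fin k → ℝ))
    (hP0 : P0 = {π ∈ probSimplex (Fin k) | (∀ i, 0 < π i) ∧
      ∑ i : Fin (k - 1),
        a i * Real.log (π (Fin.castLE (Nat.sub_le k 1) i) / π ⟨k - 1, by omega⟩) = b}) :
    (∃ n, 1 ≤ n ∧ ∃ φ, IsTest (Fin k) n φ ∧ IsNTUB (Fin k) n P0 φ) ↔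
      ∃ (a' : Fin (k - 1) → ℚ) (b' : ℝ),
        P0 = {π ∈ probSimplex (Fin k) | (∀ i, 0 < π i) ∧
          ∑ i : Fin (k - 1),
            (a' i : ℝ) * Real.log (π (Fin.castLE (Nat.sub_le k 1) i) / π ⟨k - 1, by omega⟩) = b'} := by
  obtain ⟨m, rfl⟩ : ∃ m, k = m + 1 := ⟨k - 1, by omega⟩
  have hP0' : P0 = NH (m := m) a b := hP0
  constructor
  · rintro ⟨n, _, φ, _, hφ⟩
    rw [hP0'] at hφ ⊢
    exact forward (m := m) ha b n φ hφ
  · rintro ⟨a', b', h⟩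
    rw [hP0']
    rw [hP0'] at h
    exact backward (m := m) ha b a' b' h
end

section
/- Let P0 be an algebraic null hypothesis (P0 = Δ_{k-1} ∩ {π : g(π)=0 for all g ∈ G} with ∅ ≠ P0 ≠ Δ_{k-1}) with projection P̃0 ⊆ Δ̃_{k-1}, and let I(P̃0) = {f ∈ MvPolynomial (Fin (k−1)) ℝ : f(π') = 0 for all π' ∈ P̃0} be its vanishing ideal. Set d₀ = min{totalDegree f : f ∈ I(P̃0), f ≠ 0} and d = min{i ∈ ℕ : {π' ∈ Δ̃_{k-1} : f(π') = 0 for every f ∈ I(P̃0) with totalDegree f ≤ i} = P̃0}. Then: (a) the minimum total degree of a polynomial of the form ∑_{j=1}^m f_j² with f_1,…,f_m ∈ MvPolynomial (Fin (k−1)) ℝ not all zero that vanishes at every point of P̃0 is exactly 2·d₀; (b) the minimum total degree of such a sum of squares that vanishes at every point of P̃0 and is strictly positive at every point of Δ̃_{k-1} \ P̃0 is exactly 2·d. -/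
open Finset

/-- The projected simplex in `ℝ^(k-1)`. -/
def projSimplex (k : ℕ) : Set (Fin (k - 1) → ℝ) :=
  {π' | (∀ i, 0 ≤ π' i) ∧ ∑ i, π' i ≤ 1}

/-- Identify `π' ∈ Δ̃_{k-1}` with `(π'_1, …, π'_{k-1}, 1 - ∑ i, π' i) ∈ Δ_{k-1}`. -/
def liftProj (k : ℕ) (π' : Fin (k - 1) → ℝ) : Fin k → ℝ :=
  fun i => if h : (i : ℕ) < k - 1 then π' ⟨(i : ℕ), h⟩ else 1 - ∑ j, π' j

/-- Projection of a point of `Δ_{k-1}` onto its first `k-1` coordinates. -/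
def projPoint (k : ℕ) (π : Fin k → ℝ) : Fin (k - 1) → ℝ :=
  fun j => π (Fin.castLE (Nat.sub_le k 1) j)

open MonomialOrder in
theorem sos_deg_lower {n m : ℕ} (f : Fin m → MvPolynomial (Fin n) ℝ) (i : Fin m) :
    2 * (f i).totalDegree ≤ (∑ j, (f j) ^ 2).totalDegree := by
  obtain ⟨j0, -, hj0⟩ := Finset.exists_max_image (Finset.univ : Finset (Fin m))
    (fun j => (degLex : MonomialOrder (Fin n)).toSyn (degLex.degree (f j))) ⟨i, Finset.mem_univ i⟩
  have h1 : (f i).totalDegree ≤ (f j0).totalDegree :=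
    MvPolynomial.degLex_totalDegree_monotone (hj0 i (Finset.mem_univ i))
  by_cases h0 : f j0 = 0
  · rw [h0, MvPolynomial.totalDegree_zero] at h1
    omega
  set a := (degLex : MonomialOrder (Fin n)).degree (f j0) with ha
  have hc : (∑ j, (f j) ^ 2).coeff (a + a) = ∑ j, ((f j).coeff a) ^ 2 := by
    rw [MvPolynomial.coeff_sum]
    refine Finset.sum_congr rfl fun j _ => ?_
    rw [pow_two, pow_two]
    exact MonomialOrder.coeff_mul_of_add_of_degree_le (m := degLex)
      (hj0 j (Finset.mem_univ j)) (hj0 j (Finset.mem_univ j))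
  have hpos : 0 < ∑ j, ((f j).coeff a) ^ 2 := by
    refine Finset.sum_pos' (fun j _ => sq_nonneg _) ⟨j0, Finset.mem_univ _, ?_⟩
    have : (f j0).coeff a ≠ 0 := by
      have := (degLex : MonomialOrder (Fin n)).leadingCoeff_ne_zero_iff.mpr h0
      exact this
    positivity
  have h2 : (a + a).degree ≤ (∑ j, (f j) ^ 2).totalDegree := by
    apply MvPolynomial.le_totalDegree
    rw [MvPolynomial.mem_support_iff, hc]
    exact hpos.ne'
  have h3 : a.degree = (f j0).totalDegree := MvPolynomial.degree_degLexDegree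
  rw [map_add, h3] at h2
  omega

theorem sos_deg_upper {n m : ℕ} (f : Fin m → MvPolynomial (Fin n) ℝ) (e : ℕ)
    (h : ∀ j, (f j).totalDegree ≤ e) : (∑ j, (f j) ^ 2).totalDegree ≤ 2 * e := by
  apply MvPolynomial.totalDegree_finsetSum_le
  intro j _
  exact (MvPolynomial.totalDegree_pow _ _).trans (Nat.mul_le_mul_left 2 (h j))

theorem sos_eval_zero {n m : ℕ} (f : Fin m → MvPolynomial (Fin n) ℝ) (x : Fin n → ℝ) :
    MvPolynomial.eval x (∑ j, (f j) ^ 2) = 0 ↔ ∀ j, MvPolynomial.eval x (f j) = 0 := by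
  rw [map_sum, Finset.sum_eq_zero_iff_of_nonneg]
  · simp
  · intro j _
    rw [map_pow]
    positivity

theorem sos_eval_nonneg {n m : ℕ} (f : Fin m → MvPolynomial (Fin n) ℝ) (x : Fin n → ℝ) :
    0 ≤ MvPolynomial.eval x (∑ j, (f j) ^ 2) := by
  rw [map_sum]
  refine Finset.sum_nonneg fun j _ => ?_
  rw [map_pow]
  positivity

theorem finite_zeros {n : ℕ} (S : Set (MvPolynomial (Fin n) ℝ)) :
    ∃ s : Finset (MvPolynomial (Fin n) ℝ), ↑s ⊆ S ∧
      ∀ x : Fin n → ℝ, (∀ f ∈ s, MvPolynomial.eval x f = 0) →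
        ∀ f ∈ S, MvPolynomial.eval x f = 0 := by
  obtain ⟨s, hs, hsp⟩ := (Submodule.fg_span_iff_fg_span_finset_subset
    (R := MvPolynomial (Fin n) ℝ) S).1 (IsNoetherian.noetherian _)
  refine ⟨s, hs, fun x hx f hf => ?_⟩
  have h1 : f ∈ Submodule.span (MvPolynomial (Fin n) ℝ) (s : Set (MvPolynomial (Fin n) ℝ)) := by
    rw [← hsp]
    exact Submodule.subset_span hf
  have h2 : Submodule.span (MvPolynomial (Fin n) ℝ) (s : Set (MvPolynomial (Fin n) ℝ)) ≤
      RingHom.ker (MvPolynomial.eval x) := Submodule.span_le.2 fun g hg => hx g hg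
  exact h2 h1

noncomputable def liftPoly (k : ℕ) (g : MvPolynomial (Fin k) ℝ) :
    MvPolynomial (Fin (k - 1)) ℝ :=
  MvPolynomial.bind₁ (fun i : Fin k => if h : (i : ℕ) < k - 1 then
    (MvPolynomial.X ⟨(i : ℕ), h⟩ : MvPolynomial (Fin (k - 1)) ℝ)
    else 1 - ∑ j, MvPolynomial.X j) g

theorem eval_liftPoly (k : ℕ) (g : MvPolynomial (Fin k) ℝ) (x : Fin (k - 1) → ℝ) :
    MvPolynomial.eval x (liftPoly k g) = MvPolynomial.eval (liftProj k x) g := by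
  unfold liftPoly
  rw [MvPolynomial.eval, MvPolynomial.eval₂Hom_bind₁, MvPolynomial.eval]
  congr 2
  funext i
  unfold liftProj
  split_ifs <;> simp

theorem sum_split (k : ℕ) (hk : 2 ≤ k) (F : Fin k → ℝ) :
    ∑ i, F i = (∑ j : Fin (k - 1), F (Fin.castLE (Nat.sub_le k 1) j)) + F ⟨k - 1, by omega⟩ := by
  obtain ⟨n, rfl⟩ : ∃ n, k = n + 1 := ⟨k - 1, by omega⟩
  exact Fin.sum_univ_castSucc F

theorem liftProj_mem (k : ℕ) (hk : 2 ≤ k) (x : Fin (k - 1) → ℝ) (hx : x ∈ projSimplex k) :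
    liftProj k x ∈ probSimplex (Fin k) := by
  refine ⟨fun i => ?_, ?_⟩
  · unfold liftProj
    split_ifs with h
    · exact hx.1 _
    · linarith [hx.2]
  · rw [sum_split k hk]
    simp [liftProj]

theorem exists_lift (k : ℕ) (hk : 2 ≤ k) (p : Fin k → ℝ) (hp : p ∈ probSimplex (Fin k)) :
    ∃ x ∈ projSimplex k, liftProj k x = p := by
  have h := hp.2
  rw [sum_split k hk] at h
  refine ⟨projPoint k p, ⟨fun i => hp.1 _, ?_⟩, ?_⟩
  · have := hp.1 ⟨k - 1, by omega⟩
    unfold projPoint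
    linarith
  · funext i
    unfold liftProj
    split_ifs with hi
    · rfl
    · have : i = ⟨k - 1, by omega⟩ := by
        apply Fin.ext
        have := i.2
        simp only
        omega
      rw [this]
      unfold projPoint
      linarith

/-- sum-of-squares degree thresholds in terms of the vanishing ideal. -/
theorem stmt_9 (k : ℕ) (hk : 2 ≤ k)
    (G : Set (MvPolynomial (Fin k) ℝ))
    (P0 : Set (Fin k → ℝ))
    (hP0 : P0 = probSimplex (Fin k) ∩ {π | ∀ g ∈ G, MvPolynomial.eval π g = 0})
    (hne : P0.Nonempty) (hneq : P0 ≠ probSimplex (Fin k))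
    (Pt0 : Set (Fin (k - 1) → ℝ))
    (hPt0 : Pt0 = {π' ∈ projSimplex k | liftProj k π' ∈ P0})
    (VI : Set (MvPolynomial (Fin (k - 1)) ℝ))
    (hVI : VI = {f | ∀ π' ∈ Pt0, MvPolynomial.eval π' f = 0})
    (d₀ d : ℕ)
    (hd₀ : d₀ = sInf (MvPolynomial.totalDegree '' {f ∈ VI | f ≠ 0}))
    (hd : d = sInf {i : ℕ |
      {π' ∈ projSimplex k | ∀ f ∈ VI, f.totalDegree ≤ i → MvPolynomial.eval π' f = 0} = Pt0}) :
    IsLeast {D : ℕ | ∃ (m : ℕ) (f : Fin m → MvPolynomial (Fin (k - 1)) ℝ),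
        (∃ j, f j ≠ 0) ∧
        (∀ π' ∈ Pt0, MvPolynomial.eval π' (∑ j, (f j) ^ 2) = 0) ∧
        (∑ j, (f j) ^ 2).totalDegree = D} (2 * d₀) ∧
    IsLeast {D : ℕ | ∃ (m : ℕ) (f : Fin m → MvPolynomial (Fin (k - 1)) ℝ),
        (∃ j, f j ≠ 0) ∧
        (∀ π' ∈ Pt0, MvPolynomial.eval π' (∑ j, (f j) ^ 2) = 0) ∧
        (∀ π' ∈ projSimplex k \ Pt0, 0 < MvPolynomial.eval π' (∑ j, (f j) ^ 2)) ∧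
        (∑ j, (f j) ^ 2).totalDegree = D} (2 * d) := by
  have hsub : ∀ x ∈ Pt0, x ∈ projSimplex k := by
    intro x hx
    rw [hPt0] at hx
    exact hx.1
  have hmemVI : ∀ f, f ∈ VI ↔ ∀ x ∈ Pt0, MvPolynomial.eval x f = 0 := by
    intro f
    rw [hVI]
    rfl
  have hzero : ∀ x ∈ projSimplex k, (∀ f ∈ VI, MvPolynomial.eval x f = 0) → x ∈ Pt0 := by
    intro x hx hf
    rw [hPt0]
    refine ⟨hx, ?_⟩
    rw [hP0]
    refine ⟨liftProj_mem k hk x hx, fun g hg => ?_⟩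
    rw [← eval_liftPoly]
    apply hf
    rw [hmemVI]
    intro y hy
    rw [eval_liftPoly]
    rw [hPt0] at hy
    have h2 := hy.2
    rw [hP0] at h2
    exact h2.2 g hg
  obtain ⟨x0, hx0, hx0n⟩ : ∃ x ∈ projSimplex k, x ∉ Pt0 := by
    by_contra hcon
    push Not at hcon
    apply hneq
    apply Set.Subset.antisymm
    · rw [hP0]
      exact Set.inter_subset_left
    · intro p hp
      obtain ⟨x, hx, rfl⟩ := exists_lift k hk p hp
      have := hcon x hx
      rw [hPt0] at this
      exact this.2
  refine ⟨⟨?_, ?_⟩, ⟨?_, ?_⟩⟩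
  · have hnon : (MvPolynomial.totalDegree '' {f ∈ VI | f ≠ 0}).Nonempty := by
      by_contra hcon
      apply hx0n
      apply hzero x0 hx0
      intro f hf
      by_contra hne
      apply hcon
      refine ⟨_, f, ⟨hf, ?_⟩, rfl⟩
      rintro rfl
      simp at hne
    obtain ⟨f, ⟨hf, hf0⟩, hfd⟩ := Nat.sInf_mem hnon
    rw [← hd₀] at hfd
    refine ⟨1, fun _ => f, ⟨0, hf0⟩, ?_, ?_⟩
    · intro x hx
      rw [sos_eval_zero]
      intro _
      exact (hmemVI f).1 hf x hx
    · apply le_antisymm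
      · exact sos_deg_upper _ _ fun _ => hfd.le
      · rw [← hfd]
        exact sos_deg_lower (fun _ : Fin 1 => f) 0
  · rintro D ⟨m, f, ⟨j, hj⟩, hv, rfl⟩
    refine le_trans (Nat.mul_le_mul_left 2 ?_) (sos_deg_lower f j)
    rw [hd₀]
    apply Nat.sInf_le
    refine ⟨f j, ⟨?_, hj⟩, rfl⟩
    rw [hmemVI]
    intro x hx
    exact (sos_eval_zero f x).1 (hv x hx) j
  all_goals
    have hset : ∀ i : ℕ, (∀ x ∈ projSimplex k,
        (∀ f ∈ VI, f.totalDegree ≤ i → MvPolynomial.eval x f = 0) → x ∈ Pt0) →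
        {π' ∈ projSimplex k | ∀ f ∈ VI, f.totalDegree ≤ i → MvPolynomial.eval π' f = 0} = Pt0 := by
      intro i hi
      ext x
      exact ⟨fun h => hi x h.1 h.2, fun h => ⟨hsub x h, fun f hf _ => (hmemVI f).1 hf x h⟩⟩
    have hlow : ∀ (m : ℕ) (f : Fin m → MvPolynomial (Fin (k - 1)) ℝ),
        (∀ π' ∈ Pt0, MvPolynomial.eval π' (∑ j, (f j) ^ 2) = 0) →
        (∀ π' ∈ projSimplex k \ Pt0, 0 < MvPolynomial.eval π' (∑ j, (f j) ^ 2)) →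
        2 * d ≤ (∑ j, (f j) ^ 2).totalDegree := by
      intro m f hv hp
      have hle : d ≤ (∑ j, (f j) ^ 2).totalDegree / 2 := by
        rw [hd]
        apply Nat.sInf_le
        apply hset
        intro x hx hz
        by_contra hxn
        refine (hp x ⟨hx, hxn⟩).ne' ?_
        rw [sos_eval_zero]
        intro j
        apply hz
        · rw [hmemVI]
          intro y hy
          exact (sos_eval_zero f y).1 (hv y hy) j
        · have := sos_deg_lower f j
          omega
      omega
  · have hnon : {i : ℕ | {π' ∈ projSimplex k | ∀ f ∈ VI, f.totalDegree ≤ i →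
        MvPolynomial.eval π' f = 0} = Pt0}.Nonempty := by
      obtain ⟨s, hs, hsz⟩ := finite_zeros VI
      refine ⟨s.sup MvPolynomial.totalDegree, ?_⟩
      apply hset
      intro x hx hz
      apply hzero x hx
      apply hsz x
      intro f hf
      exact hz f (hs hf) (Finset.le_sup (f := MvPolynomial.totalDegree) hf)
    have hdm := Nat.sInf_mem hnon
    rw [← hd] at hdm
    obtain ⟨s, hs, hsz⟩ := finite_zeros {f | f ∈ VI ∧ f.totalDegree ≤ d}
    have hout : ∀ x ∈ projSimplex k, x ∉ Pt0 →
        ∃ j, MvPolynomial.eval x ((s.equivFin.symm j : MvPolynomial (Fin (k - 1)) ℝ)) ≠ 0 := by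
      intro x hx hxn
      by_contra hcon
      push Not at hcon
      apply hxn
      have h1 : x ∈ {π' ∈ projSimplex k | ∀ f ∈ VI, f.totalDegree ≤ d →
          MvPolynomial.eval π' f = 0} := by
        refine ⟨hx, fun f hf hfd => hsz x ?_ f ⟨hf, hfd⟩⟩
        intro g hg
        have := hcon (s.equivFin ⟨g, hg⟩)
        simpa using this
      exact hdm.subset h1
    have hv : ∀ π' ∈ Pt0, MvPolynomial.eval π'
        (∑ j, ((s.equivFin.symm j : MvPolynomial (Fin (k - 1)) ℝ)) ^ 2) = 0 := by
      intro x hx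
      rw [sos_eval_zero]
      intro j
      exact (hmemVI _).1 (hs (s.equivFin.symm j).2).1 x hx
    have hp : ∀ π' ∈ projSimplex k \ Pt0, 0 < MvPolynomial.eval π'
        (∑ j, ((s.equivFin.symm j : MvPolynomial (Fin (k - 1)) ℝ)) ^ 2) := by
      intro x hx
      obtain ⟨j, hj⟩ := hout x hx.1 hx.2
      refine lt_of_le_of_ne (sos_eval_nonneg _ x) fun h => hj ?_
      exact (sos_eval_zero _ x).1 h.symm j
    refine ⟨s.card, fun j => (s.equivFin.symm j : MvPolynomial (Fin (k - 1)) ℝ), ?_, hv, hp, ?_⟩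
    · obtain ⟨j, hj⟩ := hout x0 hx0 hx0n
      refine ⟨j, fun h => hj ?_⟩
      simp only at h
      rw [h, map_zero]
    · apply le_antisymm
      · exact sos_deg_upper _ _ fun j => (hs (s.equivFin.symm j).2).2
      · exact hlow _ _ hv hp
  · rintro D ⟨m, f, -, hv, hp, rfl⟩
    exact hlow m f hv hp
end

section
/- Let f_1,…,f_m ∈ MvPolynomial (Fin q) ℝ, and let φ : ℂ^p → ℂ^q be a map whose q components are given by evaluating polynomials with real coefficients, such that the image φ(ℂ^p) equals the complex zero set {z ∈ ℂ^q : f_i(z) = 0 for i = 1,…,m} (evaluating each f_i via the inclusion ℝ ⊆ ℂ). Let S ⊆ ℝ^p have nonempty interior and set P0 = φ(S) (a subset of ℝ^q). Then for every g ∈ MvPolynomial (Fin q) ℝ: g vanishes at every point of P0 if and only if the image of g under coefficient extension MvPolynomial.map (algebraMap ℝ ℂ) belongs to the radical of the ideal of MvPolynomial (Fin q) ℂ generated by the images of f_1,…,f_m. -/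
/-- for a polynomially parameterized (complex) variety whose real points
contain the image `P0 = φ(S)` of a set `S` with nonempty interior, a real polynomial
vanishes on `P0` iff its complexification lies in the radical of the ideal generated by
the (complexified) defining polynomials. -/
theorem stmt_11 (p q : ℕ) (hp : 0 < p) (hq : 0 < q) (m : ℕ)
    (f : Fin m → MvPolynomial (Fin q) ℝ)
    (Φ : Fin q → MvPolynomial (Fin p) ℝ)
    (himage : ∀ w : Fin q → ℂ,
      (∃ z : Fin p → ℂ, ∀ j,
        MvPolynomial.eval z (MvPolynomial.map (algebraMap ℝ ℂ) (Φ j)) = w j) ↔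
      (∀ i, MvPolynomial.eval w (MvPolynomial.map (algebraMap ℝ ℂ) (f i)) = 0))
    (S : Set (Fin p → ℝ)) (hS : (interior S).Nonempty)
    (P0 : Set (Fin q → ℝ))
    (hP0 : P0 = {y | ∃ s ∈ S, ∀ j, MvPolynomial.eval s (Φ j) = y j}) :
    ∀ g : MvPolynomial (Fin q) ℝ,
      (∀ y ∈ P0, MvPolynomial.eval y g = 0) ↔
      MvPolynomial.map (algebraMap ℝ ℂ) g ∈
        (Ideal.span (Set.range fun i => MvPolynomial.map (algebraMap ℝ ℂ) (f i))).radical := by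
  intro g
  subst hP0
  have e1 : ∀ s : Fin p → ℝ, MvPolynomial.eval s (MvPolynomial.bind₁ Φ g) =
      MvPolynomial.eval (fun j => MvPolynomial.eval s (Φ j)) g := by
    intro s
    have := MvPolynomial.eval₂Hom_bind₁ (RingHom.id ℝ) s Φ g
    exact this
  have e2 : ∀ z : Fin p → ℂ,
      MvPolynomial.eval z (MvPolynomial.map (algebraMap ℝ ℂ) (MvPolynomial.bind₁ Φ g)) =
      MvPolynomial.eval
        (fun j => MvPolynomial.eval z (MvPolynomial.map (algebraMap ℝ ℂ) (Φ j)))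
        (MvPolynomial.map (algebraMap ℝ ℂ) g) := by
    intro z
    rw [MvPolynomial.map_bind₁]
    exact MvPolynomial.eval₂Hom_bind₁ (RingHom.id ℂ) z _ _
  have k1 : (∀ y ∈ {y | ∃ s ∈ S, ∀ j, MvPolynomial.eval s (Φ j) = y j},
      MvPolynomial.eval y g = 0) ↔ MvPolynomial.bind₁ Φ g = 0 := by
    constructor
    · intro h
      obtain ⟨x, hx⟩ := hS
      obtain ⟨ε, hε, hb⟩ := Metric.isOpen_iff.1 isOpen_interior x hx
      refine MvPolynomial.funext_set (fun i => Metric.ball (x i) ε) ?_ ?_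
      · intro i
        rw [Real.ball_eq_Ioo]
        exact Set.Ioo_infinite (by linarith)
      · intro s hs
        rw [← ball_pi _ hε] at hs
        rw [e1, map_zero]
        exact h _ ⟨s, interior_subset (hb hs), fun j => rfl⟩
    · rintro h y ⟨s, -, hs⟩
      rw [← funext hs, ← e1, h, map_zero]
  rw [k1, ← MvPolynomial.vanishingIdeal_zeroLocus_eq_radical (K := ℂ),
    MvPolynomial.mem_vanishingIdeal_iff, MvPolynomial.zeroLocus_span]
  constructor
  · intro h w hw
    obtain ⟨z, hz⟩ := (himage w).2 (fun i => hw _ ⟨i, rfl⟩)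
    have := e2 z
    rw [h, map_zero, map_zero, funext hz] at this
    exact this.symm
  · intro h
    apply MvPolynomial.map_injective (algebraMap ℝ ℂ) (algebraMap ℝ ℂ).injective
    apply MvPolynomial.funext
    intro z
    rw [e2, map_zero, map_zero]
    apply h
    rintro _ ⟨i, rfl⟩
    exact (himage _).1 ⟨z, fun j => rfl⟩ i
end

section
/- Assume: P0 is an algebraic null hypothesis (P0 = Δ_{k-1} ∩ {π : g(π)=0 for all g ∈ G} with ∅ ≠ P0 ≠ Δ_{k-1}) with projection P̃0 ⊆ Δ̃_{k-1}; the closure of int(Δ̃_{k-1}) ∩ P̃0 equals P̃0; the vanishing ideal I(P̃0) = {h ∈ MvPolynomial (Fin (k−1)) ℝ : h = 0 on P̃0} is the principal ideal generated by a single polynomial f; and the gradient of f (the vector of partial derivatives pderiv i f) is nonzero when evaluated at every point of P̃0. If φ is an NTUB test of P0 of sample size n whose size is α, then there exists h ∈ MvPolynomial (Fin (k−1)) ℝ of total degree at most n − 2·totalDegree(f), with h(π') ≥ 0 for all π' ∈ Δ̃_{k-1}, such that β_φ(π'_1,…,π'_{k-1}, 1−∑ i π' i) = f(π')²·h(π')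 + α for every π' ∈ ℝ^{k-1}; and if moreover φ is SUB, then this h satisfies h(π') > 0 for all π' ∈ Δ̃_{k-1} \ P̃0. -/
open Finset

theorem aux_hasDerivAt {m : ℕ} (p : MvPolynomial (Fin m) ℝ) (x : Fin m → ℝ) (i : Fin m) :
    HasDerivAt (fun t : ℝ => MvPolynomial.eval (Function.update x i t) p)
      (MvPolynomial.eval x (MvPolynomial.pderiv i p)) (x i) := by
  induction p using MvPolynomial.induction_on with
  | C a => simpa using hasDerivAt_const (x i) a
  | add p q hp hq => simpa [Pi.add_def] using HasDerivAt.fun_add hp hq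
  | mul_X p j hp =>
    have hX : HasDerivAt (fun t : ℝ => Function.update x i t j)
        (MvPolynomial.eval x (MvPolynomial.pderiv i (MvPolynomial.X j))) (x i) := by
      by_cases hij : j = i
      · subst hij
        simpa using hasDerivAt_id' (x j)
      · simpa [hij, MvPolynomial.pderiv_X_of_ne hij] using hasDerivAt_const (x i) (x j)
    have := hp.mul hX
    simp only [Function.update_eq_self] at this
    rw [MvPolynomial.pderiv_mul]
    simp only [map_add, map_mul, MvPolynomial.eval_X]
    exact this

theorem aux_cont {m : ℕ} (x : Fin m → ℝ) (i : Fin m) :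
    Filter.Tendsto (fun t : ℝ => Function.update x i t) (nhds (x i)) (nhds x) := by
  have h : Continuous (fun t : ℝ => Function.update x i t) :=
    continuous_const.update i continuous_id
  simpa using h.tendsto (x i)

theorem aux_dense {m : ℕ} (S T : Set (Fin m → ℝ)) (hcl : closure (interior S ∩ T) = T)
    (f : MvPolynomial (Fin m) ℝ)
    (hgrad : ∀ x ∈ T, ∃ i, MvPolynomial.eval x (MvPolynomial.pderiv i f) ≠ 0) :
    T ⊆ closure {y | y ∈ S ∧ MvPolynomial.eval y f ≠ 0} := by
  conv_lhs => rw [← hcl]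
  refine closure_minimal ?_ isClosed_closure
  rintro x ⟨hxS, hxT⟩
  obtain ⟨i, hi⟩ := hgrad x hxT
  have h1 := (aux_hasDerivAt f x i).eventually_ne (c := 0) hi
  have h2 : Filter.Tendsto (fun t : ℝ => Function.update x i t)
      (nhdsWithin (x i) {x i}ᶜ) (nhds x) := (aux_cont x i).mono_left nhdsWithin_le_nhds
  have h3 := h2.eventually (mem_interior_iff_mem_nhds.1 hxS)
  refine mem_closure_of_tendsto h2 ?_
  filter_upwards [h1, h3] with t a b
  exact ⟨b, a⟩

theorem aux_core {m : ℕ} (S T : Set (Fin m → ℝ)) (hcl : closure (interior S ∩ T) = T)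
    (f : MvPolynomial (Fin m) ℝ)
    (hprincipal : ∀ h : MvPolynomial (Fin m) ℝ,
      (∀ x ∈ T, MvPolynomial.eval x h = 0) ↔ h ∈ Ideal.span {f})
    (hgrad : ∀ x ∈ T, ∃ i, MvPolynomial.eval x (MvPolynomial.pderiv i f) ≠ 0)
    (hz : ∀ x ∈ S, MvPolynomial.eval x f = 0 → x ∈ T)
    (p : MvPolynomial (Fin m) ℝ) (hp0 : ∀ x ∈ T, MvPolynomial.eval x p = 0)
    (hpos : ∀ x ∈ S, 0 ≤ MvPolynomial.eval x p) :
    ∃ h, p = f ^ 2 * h ∧ ∀ x ∈ S, 0 ≤ MvPolynomial.eval x h := by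
  have hf0 : ∀ x ∈ T, MvPolynomial.eval x f = 0 :=
    (hprincipal f).2 (Ideal.mem_span_singleton_self f)
  obtain ⟨q, hq⟩ := Ideal.mem_span_singleton.1 ((hprincipal p).1 hp0)
  have hq0 : ∀ x ∈ T, MvPolynomial.eval x q = 0 := by
    have hsub : T ⊆ {x | MvPolynomial.eval x q = 0} := by
      conv_lhs => rw [← hcl]
      refine closure_minimal ?_ (isClosed_eq (MvPolynomial.continuous_eval q) continuous_const)
      rintro x ⟨hxS, hxT⟩
      obtain ⟨i, hi⟩ := hgrad x hxT
      have hmin : IsLocalMin (fun t : ℝ => MvPolynomial.eval (Function.update x i t) p) (x i) := by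
        have h3 := (aux_cont x i).eventually (mem_interior_iff_mem_nhds.1 hxS)
        filter_upwards [h3] with t ht
        simpa [hp0 x hxT] using hpos _ ht
      have h4 := hmin.hasDerivAt_eq_zero (aux_hasDerivAt p x i)
      rw [hq, MvPolynomial.pderiv_mul] at h4
      simp only [map_add, map_mul, hf0 x hxT, zero_mul, add_zero, mul_eq_zero] at h4
      exact h4.resolve_left hi
    exact hsub
  obtain ⟨h, hh⟩ := Ideal.mem_span_singleton.1 ((hprincipal q).1 hq0)
  have hph : p = f ^ 2 * h := by rw [hq, hh]; ring
  have hne : ∀ x ∈ S, MvPolynomial.eval x f ≠ 0 → 0 ≤ MvPolynomial.eval x h := by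
    intro x hx hfx
    have := hpos x hx
    rw [hph, map_mul, map_pow] at this
    exact nonneg_of_mul_nonneg_right this (by positivity)
  refine ⟨h, hph, fun x hx => ?_⟩
  by_cases hfx : MvPolynomial.eval x f = 0
  · have h1 := aux_dense S T hcl f hgrad (hz x hx hfx)
    have h2 : closure {y | y ∈ S ∧ MvPolynomial.eval y f ≠ 0} ⊆
        {y | 0 ≤ MvPolynomial.eval y h} :=
      closure_minimal (fun y hy => hne y hy.1 hy.2)
        (isClosed_le continuous_const (MvPolynomial.continuous_eval h))
    exact h2 h1
  · exact hne x hx hfx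

noncomputable def auxL (k : ℕ) (i : Fin k) : MvPolynomial (Fin (k - 1)) ℝ :=
  if h : (i : ℕ) < k - 1 then MvPolynomial.X ⟨(i : ℕ), h⟩ else 1 - ∑ j, MvPolynomial.X j

theorem auxL_eval (k : ℕ) (x : Fin (k - 1) → ℝ) :
    (fun i => MvPolynomial.eval x (auxL k i)) = liftProj k x := by
  funext i
  unfold auxL liftProj
  split_ifs <;> simp

theorem auxL_deg (k : ℕ) (i : Fin k) : (auxL k i).totalDegree ≤ 1 := by
  unfold auxL
  split_ifs
  · simp
  · refine (MvPolynomial.totalDegree_sub _ _).trans (max_le (by simp) ?_)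
    exact MvPolynomial.totalDegree_finsetSum_le (fun j _ => by simp)

noncomputable def auxB (k n : ℕ) (φ : (Fin k → ℕ) → ℝ) : MvPolynomial (Fin (k - 1)) ℝ :=
  ∑ x ∈ countVecs (Fin k) n,
    MvPolynomial.C (φ x * (Nat.multinomial Finset.univ x : ℝ)) * ∏ i, auxL k i ^ x i

theorem auxB_eval (k n : ℕ) (φ : (Fin k → ℕ) → ℝ) (y : Fin (k - 1) → ℝ) :
    MvPolynomial.eval y (auxB k n φ) = powerFn (Fin k) n φ (liftProj k y) := by
  unfold auxB powerFn
  rw [← auxL_eval]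
  simp [map_sum, map_prod]

theorem auxB_deg (k n : ℕ) (φ : (Fin k → ℕ) → ℝ) : (auxB k n φ).totalDegree ≤ n := by
  unfold auxB
  refine MvPolynomial.totalDegree_finsetSum_le (fun x hx => ?_)
  refine (MvPolynomial.totalDegree_mul _ _).trans ?_
  rw [MvPolynomial.totalDegree_C, zero_add]
  refine (MvPolynomial.totalDegree_finsetProd _ _).trans ?_
  have hs : ∑ i, x i = n := (Finset.mem_filter.1 hx).2
  rw [← hs]
  refine Finset.sum_le_sum (fun i _ => ?_)
  refine (MvPolynomial.totalDegree_pow _ _).trans ?_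
  nlinarith [auxL_deg k i]

theorem aux_lift_mem (k : ℕ) (hk : 2 ≤ k) (y : Fin (k - 1) → ℝ) (hy : y ∈ projSimplex k) :
    liftProj k y ∈ probSimplex (Fin k) := by
  obtain ⟨m, rfl⟩ : ∃ m, k = m + 1 := ⟨k - 1, by omega⟩
  obtain ⟨h1, h2⟩ := hy
  refine ⟨fun i => ?_, ?_⟩
  · unfold liftProj
    split_ifs
    · exact h1 _
    · linarith
  · rw [Fin.sum_univ_castSucc]
    simp [liftProj]

theorem aux_proj (k : ℕ) (hk : 2 ≤ k) (π : Fin k → ℝ) (hπ : π ∈ probSimplex (Fin k)) :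
    projPoint k π ∈ projSimplex k ∧ liftProj k (projPoint k π) = π := by
  obtain ⟨m, rfl⟩ : ∃ m, k = m + 1 := ⟨k - 1, by omega⟩
  obtain ⟨h1, h2⟩ := hπ
  rw [Fin.sum_univ_castSucc] at h2
  have h3 : ∑ j, projPoint (m + 1) π j = ∑ j : Fin m, π j.castSucc := rfl
  refine ⟨⟨fun i => h1 _, ?_⟩, ?_⟩
  · rw [h3]; linarith [h1 (Fin.last m)]
  · funext i
    refine Fin.lastCases ?_ (fun j => ?_) i
    · have : liftProj (m + 1) (projPoint (m + 1) π) (Fin.last m) =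
        1 - ∑ j, projPoint (m + 1) π j := by simp [liftProj]
      rw [this, h3]; linarith
    · simp [liftProj, projPoint]; rfl

/-- for a principal vanishing ideal `⟨f⟩` with nonvanishing gradient on the
null set, every size-α NTUB power function has the form `f²·h + α` with `h ≥ 0` on the
projected simplex (and `h > 0` off the null set when the test is SUB). -/
theorem stmt_12 (k n : ℕ) (hk : 2 ≤ k) (hn : 1 ≤ n)
    (G : Set (MvPolynomial (Fin k) ℝ)) (P0 : Set (Fin k → ℝ))
    (hP0 : P0 = probSimplex (Fin k) ∩ {π | ∀ g ∈ G, MvPolynomial.eval π g = 0})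
    (hne : P0.Nonempty) (hneq : P0 ≠ probSimplex (Fin k))
    (Pt0 : Set (Fin (k - 1) → ℝ))
    (hPt0 : Pt0 = {π' ∈ projSimplex k | liftProj k π' ∈ P0})
    (hclos : closure (interior (projSimplex k) ∩ Pt0) = Pt0)
    (f : MvPolynomial (Fin (k - 1)) ℝ)
    (hprincipal : ∀ h : MvPolynomial (Fin (k - 1)) ℝ,
      (∀ π' ∈ Pt0, MvPolynomial.eval π' h = 0) ↔ h ∈ Ideal.span {f})
    (hgrad : ∀ π' ∈ Pt0, ∃ i, MvPolynomial.eval π' (MvPolynomial.pderiv i f) ≠ 0)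
    (α : ℝ) (φ : (Fin k → ℕ) → ℝ)
    (hφ : IsTest (Fin k) n φ) (hNTUB : IsNTUB (Fin k) n P0 φ)
    (hsize : HasSize (Fin k) n P0 α φ) :
    ∃ h : MvPolynomial (Fin (k - 1)) ℝ,
      h.totalDegree ≤ n - 2 * f.totalDegree ∧
      (∀ π' ∈ projSimplex k, 0 ≤ MvPolynomial.eval π' h) ∧
      (∀ π' : Fin (k - 1) → ℝ,
        powerFn (Fin k) n φ (liftProj k π') =
          (MvPolynomial.eval π' f) ^ 2 * MvPolynomial.eval π' h + α) ∧
      (IsSUB (Fin k) n P0 φ →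
        ∀ π' ∈ projSimplex k \ Pt0, 0 < MvPolynomial.eval π' h) := by
  have hPt : ∀ y, y ∈ Pt0 ↔ y ∈ projSimplex k ∧ liftProj k y ∈ P0 := by
    intro y; rw [hPt0]; rfl
  have hP0s : ∀ π ∈ P0, π ∈ probSimplex (Fin k) := by
    intro π h; rw [hP0] at h; exact h.1
  have hf0 : ∀ x ∈ Pt0, MvPolynomial.eval x f = 0 :=
    (hprincipal f).2 (Ideal.mem_span_singleton_self f)
  have hz : ∀ x ∈ projSimplex k, MvPolynomial.eval x f = 0 → x ∈ Pt0 := by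
    intro x hx hfx
    refine (hPt x).2 ⟨hx, ?_⟩
    rw [hP0]
    refine ⟨aux_lift_mem k hk x hx, fun g hg => ?_⟩
    have hev : ∀ y, MvPolynomial.eval y (MvPolynomial.bind₁ (auxL k) g) =
        MvPolynomial.eval (liftProj k y) g := by
      intro y
      rw [← auxL_eval]
      simp only [← MvPolynomial.coe_aeval_eq_eval, RingHom.coe_coe, MvPolynomial.aeval_bind₁]
    have hmem : MvPolynomial.bind₁ (auxL k) g ∈ Ideal.span {f} := by
      refine (hprincipal _).1 (fun y hy => ?_)
      rw [hev]
      have := ((hPt y).1 hy).2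
      rw [hP0] at this
      exact this.2 g hg
    obtain ⟨c, hc⟩ := Ideal.mem_span_singleton.1 hmem
    rw [← hev, hc, map_mul, hfx, zero_mul]
  have hd := aux_dense (projSimplex k) Pt0 hclos f hgrad
  have hle : ∀ π ∈ P0, ∀ y ∈ Pt0,
      powerFn (Fin k) n φ π ≤ powerFn (Fin k) n φ (liftProj k y) := by
    intro π hπ y hy
    have h2 : closure {y | y ∈ projSimplex k ∧ MvPolynomial.eval y f ≠ 0} ⊆
        {y | powerFn (Fin k) n φ π ≤ MvPolynomial.eval y (auxB k n φ)} := by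
      refine closure_minimal ?_
        (isClosed_le continuous_const (MvPolynomial.continuous_eval _))
      rintro z ⟨hz1, hz2⟩
      rw [Set.mem_setOf_eq]
      rw [auxB_eval]
      exact hNTUB.1 π hπ _ ⟨aux_lift_mem k hk z hz1,
        fun hz3 => hz2 (hf0 z ((hPt z).2 ⟨hz1, hz3⟩))⟩
    have h3 : powerFn (Fin k) n φ π ≤ MvPolynomial.eval y (auxB k n φ) := h2 (hd hy)
    rwa [auxB_eval] at h3
  have hα : ∀ π ∈ P0, powerFn (Fin k) n φ π = α := by
    intro π hπ
    apply le_antisymm (hsize.1 ⟨π, hπ, rfl⟩)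
    refine hsize.2 ?_
    rintro _ ⟨π', hπ', rfl⟩
    obtain ⟨a, b⟩ := aux_proj k hk π (hP0s π hπ)
    have := hle π' hπ' (projPoint k π) ((hPt _).2 ⟨a, by rwa [b]⟩)
    rwa [b] at this
  set p : MvPolynomial (Fin (k - 1)) ℝ := auxB k n φ - MvPolynomial.C α with hp
  have hpe : ∀ y, MvPolynomial.eval y p = powerFn (Fin k) n φ (liftProj k y) - α := by
    intro y; simp [hp, auxB_eval]
  obtain ⟨π0, hπ0⟩ := hne
  obtain ⟨h, hph, hh⟩ := aux_core (projSimplex k) Pt0 hclos f hprincipal hgrad hz p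
    (fun x hx => by rw [hpe, hα _ ((hPt x).1 hx).2, sub_self])
    (fun x hx => by
      rw [hpe, sub_nonneg]
      by_cases hx0 : liftProj k x ∈ P0
      · exact (hα _ hx0).ge
      · have := hNTUB.1 π0 hπ0 _ ⟨aux_lift_mem k hk x hx, hx0⟩
        rwa [hα _ hπ0] at this)
  have hpne : p ≠ 0 := by
    intro h0
    obtain ⟨a, ha, b, hb, hab⟩ := hNTUB.2
    have key : ∀ c ∈ probSimplex (Fin k), powerFn (Fin k) n φ c = α := by
      intro c hc
      have := hpe (projPoint k c)
      rw [(aux_proj k hk c hc).2, h0, map_zero] at this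
      linarith
    exact hab ((key a ha).trans (key b hb).symm)
  have hform : ∀ y, powerFn (Fin k) n φ (liftProj k y) =
      (MvPolynomial.eval y f) ^ 2 * MvPolynomial.eval y h + α := by
    intro y
    have := hpe y
    rw [hph, map_mul, map_pow] at this
    linarith
  refine ⟨h, ?_, hh, hform, ?_⟩
  · have hhne : h ≠ 0 := by rintro rfl; simp [hph] at hpne
    have hfne : f ≠ 0 := by rintro rfl; simp [hph] at hpne
    have hdeg : p.totalDegree ≤ n :=
      (MvPolynomial.totalDegree_sub_C_le _ _).trans (auxB_deg k n φ)
    rw [hph, MvPolynomial.totalDegree_mul_of_isDomain (pow_ne_zero 2 hfne) hhne, pow_two,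
      MvPolynomial.totalDegree_mul_of_isDomain hfne hfne] at hdeg
    omega
  · rintro hS y ⟨hy1, hy2⟩
    have h1 := hS π0 hπ0 (liftProj k y) ⟨aux_lift_mem k hk y hy1,
      fun hy3 => hy2 ((hPt y).2 ⟨hy1, hy3⟩)⟩
    rw [hα _ hπ0, hform] at h1
    exact pos_of_mul_pos_right (by linarith) (sq_nonneg (MvPolynomial.eval y f))
end

section
/- Assume: P0 is an algebraic null hypothesis (P0 = Δ_{k-1} ∩ {π : g(π)=0 for all g ∈ G} with ∅ ≠ P0 ≠ Δ_{k-1}) with projection P̃0 ⊆ Δ̃_{k-1}; the closure of int(Δ̃_{k-1}) ∩ P̃0 equals P̃0; the vanishing ideal I(P̃0) ⊆ MvPolynomial (Fin (k−1)) ℝ is the principal ideal generated by a single polynomial f; and the gradient of f is nonzero at every point of P̃0. Let D = 2·totalDegree(f). Then: (i) for every n < D there is no NTUB test of P0 of sample size n, and there exists an SUB test of P0 of sample size D (so the NTUB and SUB unbiasedness thresholds both equal D); (ii) for every α ∈ (0,1), the set of c > 0 such that the function π ↦ c·f(π_1,…,π_{k-1})² + α on Δ_{k-1} equals the power function of some test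 of sample size D is nonempty and has a greatest element c_α; every NTUB test of P0 of sample size D with size α has power function π ↦ c·f(π_1,…,π_{k-1})² + α on Δ_{k-1} for some c ∈ (0, c_α]; and the test whose power function equals c_α·f(π_1,…,π_{k-1})² + α on Δ_{k-1} is strictly unbiased and is the unique UMPU level-α test of sample size D. -/
open Finset

theorem aux_liftProj_mem (m : ℕ) (p : Fin m → ℝ) (hp : p ∈ projSimplex (m+1)) :
    liftProj (m+1) p ∈ probSimplex (Fin (m+1)) := by
  obtain ⟨h0, h1⟩ := hp
  change ∀ i : Fin m, 0 ≤ p i at h0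
  change ∑ i : Fin m, p i ≤ 1 at h1
  refine ⟨fun i => ?_, ?_⟩
  · unfold liftProj
    split_ifs with h
    · exact h0 _
    · change 0 ≤ 1 - ∑ j : Fin m, p j
      linarith
  · rw [Fin.sum_univ_castSucc]
    simp [liftProj]

theorem aux_projPoint_mem (m : ℕ) (p : Fin (m+1) → ℝ) (hp : p ∈ probSimplex (Fin (m+1))) :
    projPoint (m+1) p ∈ projSimplex (m+1) := by
  obtain ⟨h0, h1⟩ := hp
  refine ⟨fun i => h0 _, ?_⟩
  rw [Fin.sum_univ_castSucc] at h1
  have := h0 (Fin.last m)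
  change ∑ i : Fin m, p (Fin.castSucc i) ≤ 1
  linarith

theorem aux_lift_proj (m : ℕ) (p : Fin (m+1) → ℝ) (hp : p ∈ probSimplex (Fin (m+1))) :
    liftProj (m+1) (projPoint (m+1) p) = p := by
  obtain ⟨h0, h1⟩ := hp
  rw [Fin.sum_univ_castSucc] at h1
  funext i
  refine Fin.lastCases ?_ (fun i => ?_) i
  · simp [liftProj]
    change 1 - ∑ i : Fin m, p (Fin.castSucc i) = _
    linarith
  · simp [liftProj, projPoint]
    rfl

theorem aux_proj_lift (m : ℕ) (p : Fin m → ℝ) :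
    projPoint (m+1) (liftProj (m+1) p) = p := by
  funext i
  change liftProj (m+1) p (Fin.castSucc i) = p i
  simp [liftProj]

theorem aux_convex (m : ℕ) (p q : Fin m → ℝ) (hp : p ∈ projSimplex (m+1))
    (hq : q ∈ projSimplex (m+1)) (t : ℝ) (h0 : 0 ≤ t) (h1 : t ≤ 1) :
    (fun i => p i + t * (q i - p i)) ∈ projSimplex (m+1) := by
  obtain ⟨a0, a1⟩ := hp
  obtain ⟨b0, b1⟩ := hq
  change ∀ i : Fin m, 0 ≤ p i at a0
  change ∑ i : Fin m, p i ≤ 1 at a1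
  change ∀ i : Fin m, 0 ≤ q i at b0
  change ∑ i : Fin m, q i ≤ 1 at b1
  refine ⟨fun i => ?_, ?_⟩
  · change Fin m at i
    nlinarith [a0 i, b0 i, mul_nonneg h0 (b0 i), mul_nonneg (sub_nonneg.2 h1) (a0 i)]
  · change ∑ i : Fin m, (p i + t * (q i - p i)) ≤ 1
    rw [Finset.sum_add_distrib, ← Finset.mul_sum, Finset.sum_sub_distrib]
    nlinarith [mul_le_mul_of_nonneg_left b1 h0, mul_le_mul_of_nonneg_left a1 (sub_nonneg.2 h1)]

/-- density: an inequality off the zero set of `f` holds everywhere -/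
theorem aux_dense_s13 (m : ℕ) (f : MvPolynomial (Fin m) ℝ) (w : Fin m → ℝ)
    (hw : w ∈ projSimplex (m+1)) (hfw : MvPolynomial.eval w f ≠ 0)
    (q : MvPolynomial (Fin m) ℝ)
    (hq : ∀ p ∈ projSimplex (m+1), MvPolynomial.eval p f ≠ 0 → 0 ≤ MvPolynomial.eval p q)
    (p : Fin m → ℝ) (hp : p ∈ projSimplex (m+1)) : 0 ≤ MvPolynomial.eval p q := by
  let F : Polynomial ℝ :=
    MvPolynomial.aeval (fun i => Polynomial.C (p i) + Polynomial.X * Polynomial.C (w i - p i)) f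
  have hF : ∀ t : ℝ, F.eval t = MvPolynomial.eval (fun i => p i + t * (w i - p i)) f := by
    intro t
    simp only [F]
    rw [← Polynomial.coe_evalRingHom, MvPolynomial.aeval_def, MvPolynomial.hom_eval₂]
    rw [MvPolynomial.eval, MvPolynomial.eval₂Hom]
    simp only [RingHom.coe_mk, MonoidHom.coe_mk, OneHom.coe_mk]
    congr 1
    · ext; simp
    · funext i; simp
  have hF0 : F ≠ 0 := by
    intro h
    have := hF 1
    rw [h] at this
    simp at this
    exact hfw this.symm
  have hfin : (F.rootSet ℝ).Finite := Polynomial.rootSet_finite F ℝ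
  have hroots : {t : ℝ | F.eval t = 0}.Finite := by
    refine Set.Finite.subset (F.roots.toFinset.finite_toSet) ?_
    intro t ht
    simpa [hF0] using ht
  have hev : ∀ᶠ t in nhdsWithin (0:ℝ) (Set.Ioi 0), F.eval t ≠ 0 := by
    have h1 : ({t : ℝ | F.eval t = 0} \ {0})ᶜ ∈ nhds (0:ℝ) :=
      (hroots.subset Set.sdiff_subset).isClosed.isOpen_compl.mem_nhds (by simp)
    filter_upwards [mem_nhdsWithin_of_mem_nhds h1, self_mem_nhdsWithin] with t ht ht0 h
    exact ht ⟨h, fun h' => by simp at h'; simp [h'] at ht0⟩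
  have hev1 : ∀ᶠ t in nhdsWithin (0:ℝ) (Set.Ioi 0), t ≤ 1 :=
    mem_nhdsWithin_of_mem_nhds (Iic_mem_nhds one_pos)
  have hcont : Continuous fun t : ℝ => MvPolynomial.eval (fun i => p i + t * (w i - p i)) q :=
    (MvPolynomial.continuous_eval q).comp (by fun_prop)
  have htend : Filter.Tendsto (fun t : ℝ => MvPolynomial.eval (fun i => p i + t * (w i - p i)) q)
      (nhdsWithin (0:ℝ) (Set.Ioi 0)) (nhds (MvPolynomial.eval p q)) := by
    have := (hcont.tendsto 0).mono_left (nhdsWithin_le_nhds (s := Set.Ioi 0))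
    simpa using this
  refine ge_of_tendsto htend ?_
  filter_upwards [hev, hev1, self_mem_nhdsWithin] with t h1 h2 h3
  exact hq _ (aux_convex m p w hp hw t (le_of_lt h3) h2) (by rw [← hF]; exact h1)

theorem aux_deriv (m : ℕ) (z : Fin m → ℝ) (i : Fin m) (p : MvPolynomial (Fin m) ℝ) (t : ℝ) :
    HasDerivAt (fun t : ℝ => MvPolynomial.eval (Function.update z i t) p)
      (MvPolynomial.eval (Function.update z i t) (MvPolynomial.pderiv i p)) t := by
  induction p using MvPolynomial.induction_on with
  | C a => simpa using hasDerivAt_const t a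
  | add p q hp hq =>
    have := HasDerivAt.fun_add hp hq
    simp only [map_add]
    exact this
  | mul_X p j hp =>
    have hX : HasDerivAt (fun t : ℝ => Function.update z i t j)
        (MvPolynomial.eval (Function.update z i t) (MvPolynomial.pderiv i (MvPolynomial.X j))) t := by
      by_cases h : j = i
      · subst h; simpa using hasDerivAt_id' t
      · simpa [h, MvPolynomial.pderiv_X, Pi.single_apply] using hasDerivAt_const t (z j)
    have := hp.mul hX
    have e1 : (fun t : ℝ => MvPolynomial.eval (Function.update z i t) (p * MvPolynomial.X j))
        = (fun t : ℝ => MvPolynomial.eval (Function.update z i t) p)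
          * (fun t : ℝ => Function.update z i t j) := by
      funext t
      simp only [map_mul, MvPolynomial.eval_X, Pi.mul_apply]
    rw [e1]
    have e2 : MvPolynomial.eval (Function.update z i t)
        (MvPolynomial.pderiv i (p * MvPolynomial.X j))
        = MvPolynomial.eval (Function.update z i t) (MvPolynomial.pderiv i p)
            * Function.update z i t j
          + MvPolynomial.eval (Function.update z i t) p
            * MvPolynomial.eval (Function.update z i t)
              (MvPolynomial.pderiv i (MvPolynomial.X j)) := by
      rw [Derivation.leibniz]
      simp only [map_add, map_mul, MvPolynomial.eval_X, smul_eq_mul]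
      ring
    rw [e2]
    exact this

/-- pullback of a power function -/
theorem aux_pull (m n : ℕ) (φ : (Fin (m+1) → ℕ) → ℝ) :
    ∃ p : MvPolynomial (Fin m) ℝ, p.totalDegree ≤ n ∧ ∀ z : Fin m → ℝ,
      MvPolynomial.eval z p = powerFn (Fin (m+1)) n φ (liftProj (m+1) z) := by
  let L : Fin (m+1) → MvPolynomial (Fin m) ℝ := fun i =>
    if h : (i : ℕ) < m then MvPolynomial.X ⟨i, h⟩ else 1 - ∑ j, MvPolynomial.X j
  have hL : ∀ i, (L i).totalDegree ≤ 1 := by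
    intro i
    simp only [L]
    split_ifs
    · simp
    · refine (MvPolynomial.totalDegree_sub _ _).trans (max_le (by simp) ?_)
      refine MvPolynomial.totalDegree_finsetSum_le fun j _ => by simp
  refine ⟨∑ x ∈ countVecs (Fin (m+1)) n,
    MvPolynomial.C (φ x * (Nat.multinomial Finset.univ x : ℝ)) * ∏ i, L i ^ x i, ?_, ?_⟩
  · refine MvPolynomial.totalDegree_finsetSum_le fun x hx => ?_
    refine (MvPolynomial.totalDegree_mul _ _).trans ?_
    rw [MvPolynomial.totalDegree_C, zero_add]
    refine (MvPolynomial.totalDegree_finsetProd _ _).trans ?_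
    have hs : ∑ i, x i = n := (Finset.mem_filter.1 hx).2
    rw [← hs]
    refine Finset.sum_le_sum fun i _ => ?_
    refine (MvPolynomial.totalDegree_pow _ _).trans ?_
    simpa using Nat.mul_le_mul_left (x i) (hL i)
  · intro z
    have hLe : ∀ i, MvPolynomial.eval z (L i) = liftProj (m+1) z i := by
      intro i
      simp only [L, liftProj]
      by_cases h : (i:ℕ) < m
      · simp [h]
      · simp [h]
    simp [powerFn, hLe]

/-- homogenization -/
theorem aux_homog (m n : ℕ) (q : MvPolynomial (Fin m) ℝ) (hq : q.totalDegree ≤ n) :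
    ∃ a : (Fin (m+1) → ℕ) → ℝ, ∀ p ∈ probSimplex (Fin (m+1)),
      powerFn (Fin (m+1)) n a p = MvPolynomial.eval (projPoint (m+1) p) q := by
  let Q : MvPolynomial (Fin (m+1)) ℝ := ∑ s ∈ q.support,
    MvPolynomial.rename Fin.castSucc (MvPolynomial.monomial s (q.coeff s)) *
      (∑ i, MvPolynomial.X i) ^ (n - s.degree)
  have hQ : Q.IsHomogeneous n := by
    refine MvPolynomial.IsHomogeneous.sum _ _ _ fun s hs => ?_
    have hs' : s.degree ≤ n := by
      refine le_trans ?_ hq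
      have := MvPolynomial.le_totalDegree hs
      rwa [Finsupp.degree_eq_sum, ← Finsupp.sum_fintype _ (fun _ e => e) (fun _ => rfl)]
    have h1 : (MvPolynomial.rename (Fin.castSucc : Fin m → Fin (m+1)) (MvPolynomial.monomial s (q.coeff s))).IsHomogeneous s.degree :=
      (MvPolynomial.isHomogeneous_monomial _ rfl).rename_isHomogeneous
    have h2 : ((∑ i, MvPolynomial.X i : MvPolynomial (Fin (m+1)) ℝ) ^ (n - s.degree)).IsHomogeneous (n - s.degree) := by
      have := (MvPolynomial.IsHomogeneous.sum Finset.univ (fun i => (MvPolynomial.X i : MvPolynomial (Fin (m+1)) ℝ)) 1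
        (fun i _ => MvPolynomial.isHomogeneous_X ℝ i)).pow (n - s.degree)
      simpa using this
    have := h1.mul h2
    rwa [Nat.add_sub_cancel' hs'] at this
  have hQe : ∀ p ∈ probSimplex (Fin (m+1)),
      MvPolynomial.eval p Q = MvPolynomial.eval (projPoint (m+1) p) q := by
    intro p hp
    conv_rhs => rw [MvPolynomial.eval_eq]
    simp only [Q, map_sum, map_mul, map_pow, MvPolynomial.eval_rename, MvPolynomial.eval_X, hp.2,
      one_pow, mul_one]
    refine Finset.sum_congr rfl fun s _ => ?_
    rw [MvPolynomial.eval_monomial]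
    rw [Finsupp.prod]
    rfl
  refine ⟨fun x => Q.coeff (Finsupp.equivFunOnFinite.symm x) / (Nat.multinomial Finset.univ x : ℝ),
    fun p hp => ?_⟩
  rw [← hQe p hp, MvPolynomial.eval_eq', powerFn]
  symm
  have hsub : ∑ d ∈ Q.support, Q.coeff d * ∏ i, p i ^ d i
      = ∑ x ∈ Q.support.image (fun d : Fin (m+1) →₀ ℕ => (d : Fin (m+1) → ℕ)),
        Q.coeff (Finsupp.equivFunOnFinite.symm x) * ∏ i, p i ^ x i := by
    rw [Finset.sum_image (Function.Injective.injOn DFunLike.coe_injective)]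
    simp
  rw [hsub]
  refine (Finset.sum_subset ?_ ?_).trans (Finset.sum_congr rfl fun x hx => ?_)
  · intro x hx
    obtain ⟨d, hd, rfl⟩ := Finset.mem_image.1 hx
    have hdn : ∑ i, d i = n := by
      rw [← Finsupp.degree_eq_sum]
      by_contra hcon
      exact MvPolynomial.mem_support_iff.1 hd (hQ.coeff_eq_zero hcon)
    refine Finset.mem_filter.2 ⟨Fintype.mem_piFinset.2 fun i => Finset.mem_range.2 ?_, hdn⟩
    have : d i ≤ ∑ i, d i := Finset.single_le_sum (fun _ _ => Nat.zero_le _) (Finset.mem_univ i)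
    omega
  · intro x _ hx
    have : Q.coeff (Finsupp.equivFunOnFinite.symm x) = 0 := by
      by_contra h
      refine hx (Finset.mem_image.2 ⟨_, MvPolynomial.mem_support_iff.2 h, ?_⟩)
      simp
    rw [this, zero_mul]
  · have : (Nat.multinomial Finset.univ x : ℝ) ≠ 0 := by
      exact_mod_cast (Nat.multinomial_pos _ _).ne'
    field_simp

theorem aux_powerFn_lin (m n : ℕ) (a b : (Fin (m+1) → ℕ) → ℝ) (r s : ℝ) (p : Fin (m+1) → ℝ) :
    powerFn (Fin (m+1)) n (fun x => r * a x + s * b x) p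
      = r * powerFn (Fin (m+1)) n a p + s * powerFn (Fin (m+1)) n b p := by
  simp only [powerFn, Finset.mul_sum, ← Finset.sum_add_distrib]
  exact Finset.sum_congr rfl fun x _ => by ring

theorem aux_countVecs (m n : ℕ) : countVecs (Fin (m+1)) n = Finset.univ.piAntidiag n := by
  ext x
  simp only [countVecs, Finset.mem_filter, Fintype.mem_piFinset, Finset.mem_range,
    Finset.mem_piAntidiag, Finset.mem_univ, implies_true, and_true, and_iff_right_iff_imp]
  intro h i
  have : x i ≤ ∑ i, x i := Finset.single_le_sum (fun _ _ => Nat.zero_le _) (Finset.mem_univ i)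
  omega

theorem aux_powerFn_one (m n : ℕ) (p : Fin (m+1) → ℝ) (hp : p ∈ probSimplex (Fin (m+1))) :
    powerFn (Fin (m+1)) n (fun _ => 1) p = 1 := by
  have := Finset.sum_pow_eq_sum_piAntidiag (Finset.univ) p n
  rw [hp.2, one_pow] at this
  rw [powerFn, aux_countVecs]
  refine Eq.trans (Finset.sum_congr rfl fun x _ => ?_) this.symm
  rw [one_mul]

theorem aux_powerFn_mono (m n : ℕ) (a b : (Fin (m+1) → ℕ) → ℝ)
    (h : ∀ x ∈ countVecs (Fin (m+1)) n, a x ≤ b x)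
    (p : Fin (m+1) → ℝ) (hp : p ∈ probSimplex (Fin (m+1))) :
    powerFn (Fin (m+1)) n a p ≤ powerFn (Fin (m+1)) n b p := by
  refine Finset.sum_le_sum fun x hx => ?_
  have := Finset.prod_nonneg (s := Finset.univ) (f := fun i => p i ^ x i) (fun i _ => pow_nonneg (hp.1 i) _)
  have h2 : (0:ℝ) ≤ (Nat.multinomial Finset.univ x : ℝ) := by positivity
  have := h x hx
  gcongr

theorem aux_inj (m n : ℕ) (a b : (Fin (m+1) → ℕ) → ℝ)
    (h : ∀ p ∈ probSimplex (Fin (m+1)), powerFn (Fin (m+1)) n a p = powerFn (Fin (m+1)) n b p) :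
    ∀ x ∈ countVecs (Fin (m+1)) n, a x = b x := by
  let Q : MvPolynomial (Fin (m+1)) ℝ := ∑ x ∈ countVecs (Fin (m+1)) n,
    MvPolynomial.monomial (Finsupp.equivFunOnFinite.symm x)
      ((a x - b x) * (Nat.multinomial Finset.univ x : ℝ))
  have hQe : ∀ p, MvPolynomial.eval p Q = powerFn (Fin (m+1)) n a p - powerFn (Fin (m+1)) n b p := by
    intro p
    simp only [Q, map_sum, powerFn, ← Finset.sum_sub_distrib]
    refine Finset.sum_congr rfl fun x _ => ?_
    rw [MvPolynomial.eval_monomial, Finsupp.prod_fintype _ _ (fun _ => pow_zero _)]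
    simp
    ring
  have hscale : ∀ (c : (Fin (m+1) → ℕ) → ℝ) (p : Fin (m+1) → ℝ) (r : ℝ),
      powerFn (Fin (m+1)) n c (fun i => r * p i) = r ^ n * powerFn (Fin (m+1)) n c p := by
    intro c p r
    simp only [powerFn, Finset.mul_sum]
    refine Finset.sum_congr rfl fun x hx => ?_
    have hs : ∑ i, x i = n := (Finset.mem_filter.1 hx).2
    simp only [mul_pow, Finset.prod_mul_distrib, Finset.prod_pow_eq_pow_sum, hs]
    ring
  have hQ0 : Q = 0 := by
    refine MvPolynomial.funext_set (fun _ => Set.Ioi (0:ℝ)) (fun _ => Set.Ioi_infinite 0) ?_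
    intro p hp
    have hp' : ∀ i, 0 < p i := fun i => hp i (Set.mem_univ i)
    have hsum : 0 < ∑ i, p i := Finset.sum_pos (fun i _ => hp' i) Finset.univ_nonempty
    have h1 := h (fun i => (∑ i, p i)⁻¹ * p i)
      ⟨fun i => mul_nonneg (inv_nonneg.2 hsum.le) (hp' i).le, by
        rw [← Finset.mul_sum, inv_mul_cancel₀ hsum.ne']⟩
    rw [hscale, hscale] at h1
    have := mul_left_cancel₀ (pow_ne_zero n (inv_ne_zero hsum.ne')) h1
    rw [hQe, this]; simp
  intro x hx
  have hc : Q.coeff (Finsupp.equivFunOnFinite.symm x) = 0 := by rw [hQ0]; simp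
  simp only [Q, MvPolynomial.coeff_sum, MvPolynomial.coeff_monomial,
    EmbeddingLike.apply_eq_iff_eq] at hc
  rw [Finset.sum_ite_eq' ] at hc
  simp only [hx, if_true] at hc
  have : (Nat.multinomial Finset.univ x : ℝ) ≠ 0 := by
    exact_mod_cast (Nat.multinomial_pos _ _).ne'
  have := (mul_eq_zero.1 hc).resolve_right this
  linarith

theorem aux_key (m n : ℕ) (P0 : Set (Fin (m+1) → ℝ)) (f : MvPolynomial (Fin m) ℝ)
    (Z : Set (Fin m → ℝ)) (hZK : Z ⊆ projSimplex (m+1))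
    (hZP : ∀ z ∈ projSimplex (m+1), z ∈ Z ↔ liftProj (m+1) z ∈ P0)
    (hZf : ∀ z ∈ projSimplex (m+1), z ∈ Z ↔ MvPolynomial.eval z f = 0)
    (hZne : Z.Nonempty) (w : Fin m → ℝ) (hw : w ∈ projSimplex (m+1)) (hwZ : w ∉ Z)
    (hclos : closure (interior (projSimplex (m+1)) ∩ Z) = Z)
    (hprincipal : ∀ h : MvPolynomial (Fin m) ℝ,
      (∀ z ∈ Z, MvPolynomial.eval z h = 0) → f ∣ h)
    (hgrad : ∀ z ∈ Z, ∃ i, MvPolynomial.eval z (MvPolynomial.pderiv i f) ≠ 0)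
    (φ : (Fin (m+1) → ℕ) → ℝ) (hφ : Unbiased (Fin (m+1)) n P0 φ) :
    ∃ (a : ℝ) (g : MvPolynomial (Fin m) ℝ), (f * (f * g)).totalDegree ≤ n ∧
      ∀ p ∈ probSimplex (Fin (m+1)), powerFn (Fin (m+1)) n φ p =
        MvPolynomial.eval (projPoint (m+1) p) f ^ 2 * MvPolynomial.eval (projPoint (m+1) p) g + a := by
  obtain ⟨B, hBd, hB⟩ := aux_pull m n φ
  have hmin : ∀ z ∈ Z, ∀ y ∈ projSimplex (m+1), MvPolynomial.eval z B ≤ MvPolynomial.eval y B := by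
    intro z hz y hy
    have := aux_dense_s13 m f w hw (fun h => hwZ ((hZf w hw).2 h))
      (B - MvPolynomial.C (MvPolynomial.eval z B)) (fun p hp hfp => ?_) y hy
    · simpa using this
    · have h1 : liftProj (m+1) p ∉ P0 := fun h => hfp ((hZf p hp).1 ((hZP p hp).2 h))
      have := hφ _ ((hZP z (hZK hz)).1 hz) _ ⟨aux_liftProj_mem m p hp, h1⟩
      rw [← hB, ← hB] at this
      simpa using this
  obtain ⟨z0, hz0⟩ := hZne
  set a := MvPolynomial.eval z0 B with ha
  have hBa : ∀ z ∈ Z, MvPolynomial.eval z B = a := fun z hz =>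
    le_antisymm (hmin z hz z0 (hZK hz0)) (hmin z0 hz0 z (hZK hz))
  obtain ⟨h, hh⟩ := hprincipal (B - MvPolynomial.C a) (fun z hz => by simp [hBa z hz])
  have hint : interior (projSimplex (m+1)) ∩ Z ⊆ {z | MvPolynomial.eval z h = 0} := by
    rintro z ⟨hzi, hz⟩
    obtain ⟨i, hi⟩ := hgrad z hz
    have hder := aux_deriv m z i B (z i)
    rw [Function.update_eq_self] at hder
    have hlm : IsLocalMin (fun t : ℝ => MvPolynomial.eval (Function.update z i t) B) (z i) := by
      have hc : Continuous fun t : ℝ => Function.update z i t := by fun_prop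
      have : interior (projSimplex (m+1)) ∈ nhds (Function.update z i (z i)) := by
        rw [Function.update_eq_self]
        exact isOpen_interior.mem_nhds hzi
      filter_upwards [hc.continuousAt this] with t ht
      simp only [Function.update_eq_self]
      exact hmin z hz _ (interior_subset ht)
    have h0 := hlm.hasDerivAt_eq_zero hder
    have hB' : B = f * h + MvPolynomial.C a := by rw [← hh]; ring
    rw [hB'] at h0
    have hf0 := (hZf z (hZK hz)).1 hz
    simp [Derivation.leibniz, hf0] at h0
    exact h0.resolve_right hi
  have hcl : IsClosed {z : Fin m → ℝ | MvPolynomial.eval z h = 0} :=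
    isClosed_eq (MvPolynomial.continuous_eval h) continuous_const
  have hsub := closure_minimal hint hcl
  rw [hclos] at hsub
  obtain ⟨g, hg⟩ := hprincipal h (fun z hz => hsub hz)
  refine ⟨a, g, ?_, fun p hp => ?_⟩
  · rw [← hg, ← hh]
    exact (MvPolynomial.totalDegree_sub_C_le _ _).trans hBd
  · have := hB (projPoint (m+1) p)
    rw [aux_lift_proj m p hp] at this
    rw [← this]
    have hB' : B = f * (f * g) + MvPolynomial.C a := by rw [← hg, ← hh]; ring
    rw [hB']
    simp
    ring

/-- for a principal vanishing ideal `⟨f⟩`, the NTUB and SUB thresholds both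
equal `D = 2·deg f`; and at sample size `D`, for each size α ∈ (0,1), the admissible
constants `c` form a set with a greatest element `c_α`, every size-α NTUB test has power
`c·f² + α` with `c ∈ (0, c_α]`, and the test with power `c_α·f² + α` is strictly unbiased
and is the unique UMPU level-α test. -/
theorem stmt_13 (k : ℕ) (hk : 2 ≤ k)
    (G : Set (MvPolynomial (Fin k) ℝ)) (P0 : Set (Fin k → ℝ))
    (hP0 : P0 = probSimplex (Fin k) ∩ {π | ∀ g ∈ G, MvPolynomial.eval π g = 0})
    (hne : P0.Nonempty) (hneq : P0 ≠ probSimplex (Fin k))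
    (Pt0 : Set (Fin (k - 1) → ℝ))
    (hPt0 : Pt0 = {π' ∈ projSimplex k | liftProj k π' ∈ P0})
    (hclos : closure (interior (projSimplex k) ∩ Pt0) = Pt0)
    (f : MvPolynomial (Fin (k - 1)) ℝ)
    (hprincipal : ∀ h : MvPolynomial (Fin (k - 1)) ℝ,
      (∀ π' ∈ Pt0, MvPolynomial.eval π' h = 0) ↔ h ∈ Ideal.span {f})
    (hgrad : ∀ π' ∈ Pt0, ∃ i, MvPolynomial.eval π' (MvPolynomial.pderiv i f) ≠ 0) :
    (∀ n : ℕ, n < 2 * f.totalDegree →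
      ¬ ∃ φ, IsTest (Fin k) n φ ∧ IsNTUB (Fin k) n P0 φ) ∧
    (∃ φ, IsTest (Fin k) (2 * f.totalDegree) φ ∧ IsSUB (Fin k) (2 * f.totalDegree) P0 φ) ∧
    (∀ α : ℝ, α ∈ Set.Ioo (0 : ℝ) 1 →
      ∃ cα : ℝ,
        IsGreatest {c : ℝ | 0 < c ∧ ∃ φ, IsTest (Fin k) (2 * f.totalDegree) φ ∧
          ∀ π ∈ probSimplex (Fin k),
            powerFn (Fin k) (2 * f.totalDegree) φ π =
              c * (MvPolynomial.eval (projPoint k π) f) ^ 2 + α} cα ∧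
        (∀ φ, IsTest (Fin k) (2 * f.totalDegree) φ →
          IsNTUB (Fin k) (2 * f.totalDegree) P0 φ →
          HasSize (Fin k) (2 * f.totalDegree) P0 α φ →
          ∃ c : ℝ, 0 < c ∧ c ≤ cα ∧ ∀ π ∈ probSimplex (Fin k),
            powerFn (Fin k) (2 * f.totalDegree) φ π =
              c * (MvPolynomial.eval (projPoint k π) f) ^ 2 + α) ∧
        (∀ φ, IsTest (Fin k) (2 * f.totalDegree) φ →
          (∀ π ∈ probSimplex (Fin k),
            powerFn (Fin k) (2 * f.totalDegree) φ π =
              cα * (MvPolynomial.eval (projPoint k π) f) ^ 2 + α) →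
          IsSUB (Fin k) (2 * f.totalDegree) P0 φ ∧
          IsUMPU (Fin k) (2 * f.totalDegree) P0 α φ ∧
          ∀ ψ, IsTest (Fin k) (2 * f.totalDegree) ψ →
            IsUMPU (Fin k) (2 * f.totalDegree) P0 α ψ →
            ∀ x ∈ countVecs (Fin k) (2 * f.totalDegree), ψ x = φ x)) := by
  obtain ⟨m, rfl⟩ : ∃ m, k = m + 1 := ⟨k - 1, by omega⟩
  change MvPolynomial (Fin m) ℝ at f
  change Set (Fin m → ℝ) at Pt0
  change ∀ h : MvPolynomial (Fin m) ℝ,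
      (∀ π' ∈ Pt0, MvPolynomial.eval π' h = 0) ↔ h ∈ Ideal.span {f} at hprincipal
  have hZK : Pt0 ⊆ projSimplex (m+1) := by rw [hPt0]; exact fun z hz => hz.1
  have hZP : ∀ z ∈ projSimplex (m+1), z ∈ Pt0 ↔ liftProj (m+1) z ∈ P0 := by
    intro z hz
    rw [hPt0]
    exact ⟨fun h => h.2, fun h => ⟨hz, h⟩⟩
  have hfZ : ∀ z ∈ Pt0, MvPolynomial.eval z f = 0 :=
    (hprincipal f).2 (Ideal.subset_span rfl)
  have hP0sub : P0 ⊆ probSimplex (Fin (m+1)) := by rw [hP0]; exact Set.inter_subset_left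
  have hZf : ∀ z ∈ projSimplex (m+1), z ∈ Pt0 ↔ MvPolynomial.eval z f = 0 := by
    intro z hz
    refine ⟨hfZ z, fun hfz => (hZP z hz).2 ?_⟩
    have hL : ∀ g : MvPolynomial (Fin (m+1)) ℝ, ∃ q : MvPolynomial (Fin m) ℝ,
        ∀ z : Fin m → ℝ, MvPolynomial.eval z q = MvPolynomial.eval (liftProj (m+1) z) g := by
      intro g
      refine ⟨MvPolynomial.bind₁ (fun i : Fin (m+1) =>
        if h : (i : ℕ) < m then MvPolynomial.X ⟨i, h⟩ else 1 - ∑ j, MvPolynomial.X j) g, ?_⟩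
      intro z
      rw [MvPolynomial.eval, MvPolynomial.eval₂Hom_bind₁]
      congr 2
      funext i
      by_cases h : (i:ℕ) < m
      · simp [liftProj, h]
      · simp [liftProj, h]
    rw [hP0]
    refine ⟨aux_liftProj_mem m z hz, fun g hg => ?_⟩
    obtain ⟨q, hq⟩ := hL g
    have hqI : q ∈ Ideal.span {f} := by
      refine (hprincipal q).1 fun y hy => ?_
      rw [hq]
      have := (hZP y (hZK hy)).1 hy
      rw [hP0] at this
      exact this.2 g hg
    obtain ⟨r, hr⟩ := Ideal.mem_span_singleton.1 hqI
    rw [← hq, hr, map_mul, hfz, zero_mul]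
  have hP0f : ∀ p ∈ probSimplex (Fin (m+1)), p ∈ P0 ↔
      MvPolynomial.eval (projPoint (m+1) p) f = 0 := by
    intro p hp
    rw [← hZf _ (aux_projPoint_mem m p hp), hZP _ (aux_projPoint_mem m p hp), aux_lift_proj m p hp]
  have hZne : Pt0.Nonempty := by
    obtain ⟨p, hp⟩ := hne
    refine ⟨projPoint (m+1) p, (hZP _ (aux_projPoint_mem m p (hP0sub hp))).2 ?_⟩
    rwa [aux_lift_proj m p (hP0sub hp)]
  obtain ⟨pA, hpA, hpA0⟩ : ∃ p ∈ probSimplex (Fin (m+1)), p ∉ P0 := by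
    by_contra hcon
    push Not at hcon
    exact hneq (Set.Subset.antisymm hP0sub hcon)
  have hwf : MvPolynomial.eval (projPoint (m+1) pA) f ≠ 0 := fun h => hpA0 ((hP0f pA hpA).2 h)
  have hf0 : f ≠ 0 := fun h => hwf (by rw [h]; simp)
  have key : ∀ n φ, Unbiased (Fin (m+1)) n P0 φ →
    ∃ (a : ℝ) (g : MvPolynomial (Fin m) ℝ), (f * (f * g)).totalDegree ≤ n ∧
      ∀ p ∈ probSimplex (Fin (m+1)), powerFn (Fin (m+1)) n φ p =
        MvPolynomial.eval (projPoint (m+1) p) f ^ 2 *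
          MvPolynomial.eval (projPoint (m+1) p) g + a := by
    intro n φ hφ
    refine aux_key m n P0 f Pt0 hZK hZP hZf hZne (projPoint (m+1) pA) (aux_projPoint_mem m pA hpA)
      (fun h => hwf (hfZ _ h)) hclos ?_ hgrad φ hφ
    exact fun h hh => Ideal.mem_span_singleton.1 ((hprincipal h).1 hh)
  have hdeg : ∀ g : MvPolynomial (Fin m) ℝ, g ≠ 0 →
      (f * (f * g)).totalDegree = 2 * f.totalDegree + g.totalDegree := by
    intro g hg
    rw [MvPolynomial.totalDegree_mul_of_isDomain hf0 (mul_ne_zero hf0 hg),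
      MvPolynomial.totalDegree_mul_of_isDomain hf0 hg]
    ring
  set D := 2 * f.totalDegree with hD
  -- shape of unbiased tests at sample size D
  have shape : ∀ φ, Unbiased (Fin (m+1)) D P0 φ → ∃ a c : ℝ, 0 ≤ c ∧
      ∀ p ∈ probSimplex (Fin (m+1)), powerFn (Fin (m+1)) D φ p =
        c * MvPolynomial.eval (projPoint (m+1) p) f ^ 2 + a := by
    intro φ hφ
    obtain ⟨a, g, hg, hp⟩ := key D φ hφ
    obtain ⟨c, rfl⟩ : ∃ c, g = MvPolynomial.C c := by
      by_cases hg0 : g = 0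
      · exact ⟨0, by simp [hg0]⟩
      · rw [hdeg g hg0] at hg
        exact ⟨_, MvPolynomial.totalDegree_eq_zero_iff_eq_C.1 (by omega)⟩
    refine ⟨a, c, ?_, fun p hpp => by rw [hp p hpp]; simp; ring⟩
    obtain ⟨p0, hp0⟩ := hne
    have h1 := hφ p0 hp0 pA ⟨hpA, hpA0⟩
    rw [hp _ (hP0sub hp0), hp _ hpA, (hP0f p0 (hP0sub hp0)).1 hp0] at h1
    simp at h1
    exact nonneg_of_mul_nonneg_right h1 (by positivity)
  obtain ⟨A, hA⟩ := aux_homog m D (f * f) (by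
    refine (MvPolynomial.totalDegree_mul _ _).trans ?_
    omega)
  have hA' : ∀ p ∈ probSimplex (Fin (m+1)),
      powerFn (Fin (m+1)) D A p = MvPolynomial.eval (projPoint (m+1) p) f ^ 2 := by
    intro p hp
    rw [hA p hp, map_mul]; ring
  have hpow : ∀ c α : ℝ, ∀ p ∈ probSimplex (Fin (m+1)),
      powerFn (Fin (m+1)) D (fun x => c * A x + α * 1) p =
        c * MvPolynomial.eval (projPoint (m+1) p) f ^ 2 + α := by
    intro c α p hp
    rw [aux_powerFn_lin m D A (fun _ => 1), hA' p hp, aux_powerFn_one m D p hp, mul_one]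
  have hcoef : ∀ φ (c α : ℝ), (∀ p ∈ probSimplex (Fin (m+1)), powerFn (Fin (m+1)) D φ p =
        c * MvPolynomial.eval (projPoint (m+1) p) f ^ 2 + α) →
      ∀ x ∈ countVecs (Fin (m+1)) D, φ x = c * A x + α := by
    intro φ c α h x hx
    have := aux_inj m D φ (fun x => c * A x + α * 1)
      (fun p hp => by rw [h p hp, hpow c α p hp]) x hx
    simpa using this
  have hSUB : ∀ φ (c α : ℝ), 0 < c → (∀ p ∈ probSimplex (Fin (m+1)), powerFn (Fin (m+1)) D φ p =
        c * MvPolynomial.eval (projPoint (m+1) p) f ^ 2 + α) → IsSUB (Fin (m+1)) D P0 φ := by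
    intro φ c α hc h p0 hp0 p1 hp1
    rw [h p0 (hP0sub hp0), h p1 hp1.1, (hP0f p0 (hP0sub hp0)).1 hp0]
    have : MvPolynomial.eval (projPoint (m+1) p1) f ≠ 0 := fun h => hp1.2 ((hP0f p1 hp1.1).2 h)
    have : 0 < c * MvPolynomial.eval (projPoint (m+1) p1) f ^ 2 := by positivity
    simpa using this
  -- maximal coefficient
  have hcne : (countVecs (Fin (m+1)) D).Nonempty := by
    rw [aux_countVecs]
    by_contra hcon
    rw [Finset.not_nonempty_iff_eq_empty] at hcon
    have := aux_powerFn_one m D pA hpA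
    rw [powerFn, aux_countVecs, hcon] at this
    simp at this
  obtain ⟨xM, hxM, hmax⟩ := Finset.exists_max_image _ A hcne
  have hfle : ∀ p ∈ probSimplex (Fin (m+1)),
      MvPolynomial.eval (projPoint (m+1) p) f ^ 2 ≤ A xM := by
    intro p hp
    have h1 := aux_powerFn_mono m D A (fun x => 0 * A x + A xM * 1)
      (fun x hx => by simpa using hmax x hx) p hp
    rw [hA' p hp, hpow 0 (A xM) p hp] at h1
    simpa using h1
  have hAM : 0 < A xM := lt_of_lt_of_le (by positivity) (hfle pA hpA)
  -- the admissible set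
  have hadm : ∀ α c : ℝ, (∃ φ, IsTest (Fin (m+1)) D φ ∧ ∀ p ∈ probSimplex (Fin (m+1)),
      powerFn (Fin (m+1)) D φ p = c * MvPolynomial.eval (projPoint (m+1) p) f ^ 2 + α) ↔
      ∀ x ∈ countVecs (Fin (m+1)) D, 0 ≤ c * A x + α ∧ c * A x + α ≤ 1 := by
    intro α c
    constructor
    · rintro ⟨φ, hT, hp⟩ x hx
      rw [← hcoef φ c α hp x hx]
      exact hT x hx
    · intro h
      refine ⟨fun x => c * A x + α * 1, fun x hx => by simpa using h x hx, hpow c α⟩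
  have hgreat : ∀ α : ℝ, α ∈ Set.Ioo (0:ℝ) 1 → ∃ cα : ℝ, IsGreatest {c : ℝ | 0 < c ∧
      ∀ x ∈ countVecs (Fin (m+1)) D, 0 ≤ c * A x + α ∧ c * A x + α ≤ 1} cα := by
    rintro α ⟨hα0, hα1⟩
    let S : Set ℝ := {c : ℝ | 0 ≤ c ∧
      ∀ x ∈ countVecs (Fin (m+1)) D, 0 ≤ c * A x + α ∧ c * A x + α ≤ 1}
    have hpos : ∃ c ∈ S, 0 < c := by
      have hev : ∀ᶠ c in nhdsWithin (0:ℝ) (Set.Ioi 0),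
          ∀ x ∈ countVecs (Fin (m+1)) D, 0 ≤ c * A x + α ∧ c * A x + α ≤ 1 := by
        rw [Filter.eventually_all_finset]
        intro x _
        have hc : Continuous fun c : ℝ => c * A x + α := by fun_prop
        have hn : Set.Icc (0:ℝ) 1 ∈ nhds (0 * A x + α) := Icc_mem_nhds (by simpa) (by simpa)
        exact mem_nhdsWithin_of_mem_nhds (hc.continuousAt hn)
      obtain ⟨c, h1, h2⟩ := (hev.and self_mem_nhdsWithin).exists
      exact ⟨c, ⟨le_of_lt h2, h1⟩, h2⟩
    have hcl : IsClosed S := by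
      have : S = Set.Ici 0 ∩ ⋂ x ∈ countVecs (Fin (m+1)) D,
          (fun c : ℝ => c * A x + α) ⁻¹' Set.Icc 0 1 := by
        ext c
        simp [S]
      rw [this]
      refine isClosed_Ici.inter (isClosed_biInter fun x _ => isClosed_Icc.preimage (by fun_prop))
    have hsub : S ⊆ Set.Icc 0 (1 / A xM) := by
      rintro c ⟨h0, h⟩
      refine ⟨h0, ?_⟩
      rw [le_div_iff₀ hAM]
      linarith [(h xM hxM).2]
    obtain ⟨c1, hc1, hc1p⟩ := hpos
    obtain ⟨c, hc⟩ := (isCompact_Icc.of_isClosed_subset hcl hsub).exists_isGreatest ⟨c1, hc1⟩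
    exact ⟨c, ⟨lt_of_lt_of_le hc1p (hc.2 hc1), hc.1.2⟩, fun c' hc' => hc.2 ⟨hc'.1.le, hc'.2⟩⟩
  refine ⟨?_, ?_, ?_⟩
  · rintro n hn ⟨φ, -, hU, p, hp, p', hp', hne'⟩
    obtain ⟨a, g, hg, h⟩ := key n φ hU
    have hg0 : g = 0 := by
      by_contra hg0
      rw [hdeg g hg0] at hg
      omega
    apply hne'
    rw [h p hp, h p' hp', hg0]
    simp
  · obtain ⟨c, hc, -⟩ := hgreat (1/2) ⟨by norm_num, by norm_num⟩
    obtain ⟨φ, hT, hφ⟩ := (hadm _ _).2 hc.2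
    exact ⟨φ, hT, hSUB φ c _ hc.1 hφ⟩
  · intro α hα
    obtain ⟨cα, hcα⟩ := hgreat α hα
    refine ⟨cα, ?_, ?_, ?_⟩
    · refine ⟨⟨hcα.1.1, (hadm α cα).2 hcα.1.2⟩, ?_⟩
      rintro c ⟨h0, h⟩
      exact hcα.2 ⟨h0, (hadm α c).1 h⟩
    · rintro φ hT ⟨hU, p, hp, p', hp', hne'⟩ hsize
      obtain ⟨a, c, hc, h⟩ := shape φ hU
      have himg : powerFn (Fin (m+1)) D φ '' P0 = {a} := by
        have : ∀ q ∈ P0, powerFn (Fin (m+1)) D φ q = a := by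
          intro q hq
          rw [h q (hP0sub hq), (hP0f q (hP0sub hq)).1 hq]
          simp
        ext y
        constructor
        · rintro ⟨q, hq, rfl⟩
          exact this q hq
        · rintro rfl
          obtain ⟨q, hq⟩ := hne
          exact ⟨q, hq, this q hq⟩
      have haα : a = α := by
        unfold HasSize at hsize
        rw [himg] at hsize
        exact isLUB_singleton.unique hsize
      subst haα
      have hc' : 0 < c := by
        refine lt_of_le_of_ne hc fun h0 => hne' ?_
        rw [h p hp, h p' hp', ← h0]
        simp
      exact ⟨c, hc', hcα.2 ⟨hc', (hadm a c).1 ⟨φ, hT, h⟩⟩, h⟩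
    · intro φ hT hφ
      have hS := hSUB φ cα α hcα.1.1 hφ
      have hlev : IsLevel (Fin (m+1)) D P0 α φ := by
        intro q hq
        rw [hφ q (hP0sub hq)]
        have : MvPolynomial.eval (projPoint (m+1) q) f = 0 := (hP0f q (hP0sub hq)).1 hq
        rw [this]
        simp
      have hUM : ∀ ψ, IsTest (Fin (m+1)) D ψ → IsLevel (Fin (m+1)) D P0 α ψ →
          Unbiased (Fin (m+1)) D P0 ψ → ∀ p ∈ probSimplex (Fin (m+1)),
          powerFn (Fin (m+1)) D ψ p ≤ powerFn (Fin (m+1)) D φ p := by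
        intro ψ hTψ hLψ hUψ p hp
        obtain ⟨a, c, hc, h⟩ := shape ψ hUψ
        have haα : a ≤ α := by
          obtain ⟨q, hq⟩ := hne
          have h1 := hLψ q hq
          rw [h q (hP0sub hq), (hP0f q (hP0sub hq)).1 hq] at h1
          simpa using h1
        have hcf := (hadm a c).1 ⟨ψ, hTψ, h⟩
        rw [h p hp, hφ p hp]
        have ht0 : 0 ≤ MvPolynomial.eval (projPoint (m+1) p) f ^ 2 := sq_nonneg _
        have htA := hfle p hp
        generalize MvPolynomial.eval (projPoint (m+1) p) f ^ 2 = t at ht0 htA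
        change c * t + a ≤ cα * t + α
        rcases le_or_gt c cα with hle | hlt
        · have := mul_le_mul_of_nonneg_right hle ht0
          linarith
        · have hmem : min c ((1 - α) / A xM) ∈ {c : ℝ | 0 < c ∧
              ∀ x ∈ countVecs (Fin (m+1)) D, 0 ≤ c * A x + α ∧ c * A x + α ≤ 1} := by
            have hp1 : 0 < min c ((1 - α) / A xM) :=
              lt_min (hcα.1.1.trans hlt) (div_pos (by linarith [hα.2]) hAM)
            refine ⟨hp1, fun x hx => ⟨?_, ?_⟩⟩
            · rcases le_or_gt 0 (A x) with h0 | h0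
              · have := mul_nonneg hp1.le h0
                linarith [hα.1]
              · have := mul_le_mul_of_nonpos_right (min_le_left c ((1 - α) / A xM)) h0.le
                linarith [(hcf x hx).1]
            · have h1 := mul_le_mul_of_nonneg_left (hmax x hx) hp1.le
              have h2 := mul_le_mul_of_nonneg_right (min_le_right c ((1 - α) / A xM)) hAM.le
              rw [div_mul_cancel₀ _ hAM.ne'] at h2
              linarith
          have h1 := hcα.2 hmem
          have h2 : (1 - α) / A xM ≤ cα := by
            rcases min_le_iff.1 h1 with h | h
            · linarith
            · exact h
          rw [div_le_iff₀ hAM] at h2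
          have h3 := (hcf xM hxM).2
          have h4 := mul_le_mul_of_nonneg_left htA (sub_nonneg.2 hlt.le)
          nlinarith
      have hUφ : Unbiased (Fin (m+1)) D P0 φ := fun p0 h0 p1 h1 => (hS p0 h0 p1 h1).le
      refine ⟨hS, ⟨hlev, hUφ, fun ψ h1 h2 h3 p hp => hUM ψ h1 h2 h3 p hp.1⟩, ?_⟩
      rintro ψ hTψ ⟨hLψ, hUψ, hbest⟩
      obtain ⟨Bφ, -, hBφ⟩ := aux_pull m D φ
      obtain ⟨Bψ, -, hBψ⟩ := aux_pull m D ψ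
      refine aux_inj m D ψ φ fun p hp => le_antisymm (hUM ψ hTψ hLψ hUψ p hp) ?_
      have := aux_dense_s13 m f _ (aux_projPoint_mem m pA hpA) hwf (Bψ - Bφ) (fun q hq hfq => ?_)
        (projPoint (m+1) p) (aux_projPoint_mem m p hp)
      · rw [map_sub, hBφ, hBψ, aux_lift_proj m p hp] at this
        linarith
      · rw [map_sub, hBφ, hBψ]
        have h1 : liftProj (m+1) q ∉ P0 := fun h => hfq ((hZf q hq).1 ((hZP q hq).2 h))
        linarith [hbest φ hT hlev hUφ _ ⟨aux_liftProj_mem m q hq, h1⟩]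
end
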